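/- arXiv:2108.05611 — 7 statements merged into one kernel-verified Lean document; each statement's English description precedes it below -/
import Mathlib

section
/- Let ℐ = ((a_v, b_v))_{v ∈ V} be a finite family of bounded open intervals with a_v < b_v whose endpoints are pairwise distinct (for distinct members the endpoint sets {a_v, b_v} are disjoint). Then there exists a family (L_v)_{v ∈ V} of grounded L-shapes, indexed by the same set, whose intersection graph equals the overlap graph of ℐ: for all distinct u, v ∈ V, the intervals (a_u,b_u) and (a_v,b_v) overlap iff L_u ∩ L_v ≠ ∅. -/
/-! Take `l = a`, `r = b` and `h = exp ∘ b`: any positive strictly increasing function of the right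
endpoint serves as height. Since all endpoints and all heights are distinct, two such shapes can
meet only where the horizontal arm of one, `u` say, crosses the vertical arm of the other, `v`. This
happens exactly when `a u < a v < b u` and `h u < h v`, and the latter means `b u < b v`; so it is
the same as overlapping with `u` on the left. -/

/-- The grounded L-shape with left endpoint `l`, right endpoint `r` and height `h`. -/
def LShape (l r h : ℝ) : Set (ℝ × ℝ) :=
  ({l} ×ˢ Set.Icc 0 h) ∪ (Set.Icc l r ×ˢ {h})

/-- Two bounded open intervals `(a₁,b₁)` and `(a₂,b₂)` overlap: they intersect and neither
contains the other. -/
def Overlap (a₁ b₁ a₂ b₂ : ℝ) : Prop :=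
  (a₁ < a₂ ∧ a₂ < b₁ ∧ b₁ < b₂) ∨ (a₂ < a₁ ∧ a₁ < b₂ ∧ b₂ < b₁)

/-- Every overlap graph of intervals is an intersection graph of grounded L-shapes on the
same index set. -/
theorem circle_graph_is_grounded_L_graph {V : Type*} [Fintype V]
    (a b : V → ℝ) (hab : ∀ v, a v < b v)
    (hdist : ∀ u v : V, u ≠ v → ({a u, b u} : Set ℝ) ∩ {a v, b v} = ∅) :
    ∃ l r h : V → ℝ, (∀ v, l v < r v) ∧ (∀ v, 0 < h v) ∧
      ∀ u v : V, u ≠ v →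
        (Overlap (a u) (b u) (a v) (b v) ↔
          (LShape (l u) (r u) (h u) ∩ LShape (l v) (r v) (h v)).Nonempty) := by
  refine ⟨a, b, fun v => Real.exp (b v), hab, fun v => Real.exp_pos _, fun u v huv => ?_⟩
  have hd := hdist u v huv
  have haa : a u ≠ a v := fun e =>
    Set.eq_empty_iff_forall_notMem.1 hd (a u) ⟨by simp, by simp [e]⟩
  have hbb : b u ≠ b v := fun e =>
    Set.eq_empty_iff_forall_notMem.1 hd (b u) ⟨by simp, by simp [e]⟩
  have hab' : a u ≠ b v := fun e =>
    Set.eq_empty_iff_forall_notMem.1 hd (a u) ⟨by simp, by simp [e]⟩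
  have hba : b u ≠ a v := fun e =>
    Set.eq_empty_iff_forall_notMem.1 hd (b u) ⟨by simp, by simp [e]⟩
  constructor
  · rintro (⟨h1, h2, h3⟩ | ⟨h1, h2, h3⟩)
    · exact ⟨(a v, Real.exp (b u)),
        Or.inr ⟨⟨h1.le, h2.le⟩, rfl⟩,
        Or.inl ⟨rfl, (Real.exp_pos _).le, Real.exp_le_exp.2 h3.le⟩⟩
    · exact ⟨(a u, Real.exp (b v)),
        Or.inl ⟨rfl, (Real.exp_pos _).le, Real.exp_le_exp.2 h3.le⟩,
        Or.inr ⟨⟨h1.le, h2.le⟩, rfl⟩⟩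
  · rintro ⟨⟨x, y⟩, hu, hv⟩
    simp only [LShape, Set.mem_union, Set.mem_prod, Set.mem_singleton_iff, Set.mem_Icc] at hu hv
    rcases hu with ⟨rfl, -, hyu⟩ | ⟨⟨h1, h2⟩, rfl⟩
    · rcases hv with ⟨e, -⟩ | ⟨⟨h1, h2⟩, rfl⟩
      · exact absurd e haa
      · exact Or.inr ⟨lt_of_le_of_ne h1 haa.symm, lt_of_le_of_ne h2 hab',
          lt_of_le_of_ne (Real.exp_le_exp.1 hyu) hbb.symm⟩
    · rcases hv with ⟨rfl, -, hyv⟩ | ⟨-, e⟩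
      · exact Or.inl ⟨lt_of_le_of_ne h1 haa, lt_of_le_of_ne h2 hba.symm,
          lt_of_le_of_ne (Real.exp_le_exp.1 hyv) hbb⟩
      · exact absurd (Real.exp_injective e) hbb
end

section
/- Let L₁ and L₂ be grounded L-shapes with parameters (ℓ₁, r₁, h₁) and (ℓ₂, r₂, h₂), where ℓ₁ ≠ ℓ₂ and h₁ ≠ h₂, and suppose there is a real number b with ℓ₁ < b < r₁ and ℓ₂ < b < r₂. Then L₁ ∩ L₂ ≠ ∅ if and only if (ℓ₁ < ℓ₂ ↔ h₁ < h₂). -/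
/-- The case in which the left endpoints are strictly ordered: a common point exists exactly when
the shape starting further left is the lower one. The hypothesis `l₂ ≤ r₁` is what the common
point of the projections provides. -/
theorem LShape_inter_nonempty_iff_of_lt {l₁ r₁ h₁ l₂ r₂ h₂ : ℝ} (h₁pos : 0 < h₁)
    (hl : l₁ < l₂) (hh : h₁ ≠ h₂) (hr : l₂ ≤ r₁) :
    (LShape l₁ r₁ h₁ ∩ LShape l₂ r₂ h₂).Nonempty ↔ h₁ < h₂ := by
  simp only [LShape]
  constructor
  · rintro ⟨⟨x, y⟩, hx, hy⟩
    simp only [Set.mem_union, Set.mem_prod, Set.mem_singleton_iff, Set.mem_Icc] at hx hy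
    grind
  · intro h
    refine ⟨(l₂, h₁), Or.inr ⟨⟨hl.le, hr⟩, rfl⟩, Or.inl ⟨rfl, h₁pos.le, h.le⟩⟩

/-- Two grounded L-shapes whose projections both contain a common point `b` in their
interiors intersect iff their left endpoints and heights are ordered the same way. -/
theorem LShape_inter_iff_of_common_point
    (l₁ r₁ h₁ l₂ r₂ h₂ : ℝ) (h₁lr : l₁ < r₁) (h₂lr : l₂ < r₂)
    (h₁pos : 0 < h₁) (h₂pos : 0 < h₂)
    (hl : l₁ ≠ l₂) (hh : h₁ ≠ h₂)
    (b : ℝ) (hb₁ : l₁ < b ∧ b < r₁) (hb₂ : l₂ < b ∧ b < r₂) :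
    (LShape l₁ r₁ h₁ ∩ LShape l₂ r₂ h₂).Nonempty ↔ (l₁ < l₂ ↔ h₁ < h₂) := by
  rcases lt_or_gt_of_ne hl with hlt | hgt
  · rw [LShape_inter_nonempty_iff_of_lt h₁pos hlt hh (hb₂.1.trans hb₁.2).le]
    simp [hlt]
  · rw [Set.inter_comm,
      LShape_inter_nonempty_iff_of_lt h₂pos hgt hh.symm (hb₁.1.trans hb₂.2).le]
    grind
end

section
/- For any positive integer k and any finite set B ⊂ ℝ of size at most 2^k − 1, there exist an injective function ρ : B → ℕ and a coloring c : B → {1, …, k} such that for any b₁, b₂ ∈ B with b₁ < b₂ and c(b₁) = c(b₂), there exists b ∈ B with b₁ < b < b₂, ρ(b) < ρ(b₁) and ρ(b) < ρ(b₂). -/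
/-!
Number the elements of `B` as `1, 2, …, n` in increasing order, with `n < 2 ^ k`, and color each
element by the 2-adic valuation of its number, which is less than `k`. Two numbers with the same
valuation `v` are distinct odd multiples of `2 ^ v`, so an even multiple of `2 ^ v`, which has
larger valuation, lies strictly between them (`exists_between_padicValNat_lt`). It therefore
suffices to order `B` by decreasing valuation, breaking ties by position.
-/

theorem exists_between_padicValNat_lt {i j : ℕ} (hi : 0 < i) (hij : i < j)
    (h : padicValNat 2 i = padicValNat 2 j) :
    ∃ l, i < l ∧ l < j ∧ padicValNat 2 i < padicValNat 2 l := by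
  have hodd : ∀ m : ℕ, 0 < m → ∃ a, m = 2 ^ padicValNat 2 m * (2 * a + 1) := by
    intro m hm
    obtain ⟨b, hb⟩ := (pow_padicValNat_dvd : 2 ^ padicValNat 2 m ∣ m)
    have hn := pow_succ_padicValNat_not_dvd (p := 2) hm.ne'
    rcases Nat.even_or_odd' b with ⟨a, ha | ha⟩
    · refine absurd ⟨a, ?_⟩ hn
      rw [pow_succ, mul_assoc, ← ha]
      exact hb
    · exact ⟨a, ha ▸ hb⟩
  obtain ⟨a, ha⟩ := hodd i hi
  obtain ⟨b, hb⟩ := hodd j (hi.trans hij)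
  rw [← h] at hb
  generalize padicValNat 2 i = v at *
  have hv : 0 < 2 ^ v := by positivity
  have hab : a < b := by
    rw [ha, hb] at hij
    have := lt_of_mul_lt_mul_left hij (Nat.zero_le _)
    omega
  refine ⟨2 ^ v * (2 * a + 2), ?_, ?_, ?_⟩
  · rw [ha]
    exact Nat.mul_lt_mul_of_pos_left (by omega) hv
  · rw [hb]
    exact Nat.mul_lt_mul_of_pos_left (by omega) hv
  · have hd : 2 ^ (v + 1) ∣ 2 ^ v * (2 * a + 2) := ⟨a + 1, by ring⟩
    exact (padicValNat_dvd_iff_le (by positivity)).1 hd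

/-- The increasing numbering of a finite set of reals by `1, …, B.card`. -/
theorem exists_numbering (B : Finset ℝ) :
    ∃ r : ℝ → ℕ, StrictMonoOn r B ∧ (∀ b ∈ B, 0 < r b ∧ r b ≤ B.card) ∧
      ∀ l, 0 < l → l ≤ B.card → ∃ b ∈ B, r b = l := by
  classical
  let e := B.orderIsoOfFin rfl
  refine ⟨fun x => if h : x ∈ B then (e.symm ⟨x, h⟩ : ℕ) + 1 else 0, ?_, ?_, ?_⟩
  · intro x hx y hy hxy
    have hx' : x ∈ B := hx
    have hy' : y ∈ B := hy
    have : e.symm ⟨x, hx'⟩ < e.symm ⟨y, hy'⟩ := e.symm.strictMono hxy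
    simp only [hx', hy', dite_true]
    exact Nat.succ_lt_succ this
  · intro b hb
    simp only [hb, dite_true]
    exact ⟨Nat.succ_pos _, (e.symm ⟨b, hb⟩).2⟩
  · intro l hl hl'
    refine ⟨e ⟨l - 1, by omega⟩, (e _).2, ?_⟩
    simp only [Subtype.coe_eta, OrderIso.symm_apply_apply, Finset.coe_mem, dite_true]
    omega

/-- The divide-and-conquer lemma: any set `B` of at most `2^k - 1` reals admits a total
ordering (encoded by an injective `ρ : B → ℕ`) and a `k`-coloring `c` such that between any
two points of the same color there lies a point of `B` earlier than both in the ordering. -/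
theorem divide_and_conquer (k : ℕ) (hk : 0 < k) (B : Finset ℝ) (hB : B.card ≤ 2 ^ k - 1) :
    ∃ (ρ : ℝ → ℕ) (c : ℝ → Fin k), Set.InjOn ρ B ∧
      ∀ b₁ ∈ B, ∀ b₂ ∈ B, b₁ < b₂ → c b₁ = c b₂ →
        ∃ b ∈ B, b₁ < b ∧ b < b₂ ∧ ρ b < ρ b₁ ∧ ρ b < ρ b₂ := by
  obtain ⟨r, hmono, hr, hsurj⟩ := exists_numbering B
  have h2 : 0 < 2 ^ k := by positivity
  have hv : ∀ b ∈ B, padicValNat 2 (r b) < k := by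
    intro b hb
    obtain ⟨h0, h1⟩ := hr b hb
    have := Nat.le_of_dvd h0 (pow_padicValNat_dvd : 2 ^ padicValNat 2 (r b) ∣ r b)
    exact (Nat.pow_lt_pow_iff_right (a := 2) (by norm_num)).1 (by omega)
  -- `r b ≤ B.card`, so the multiplier `B.card + 1` makes `ρ` lexicographic in
  -- (decreasing valuation, position).
  refine ⟨fun x => (B.card + 1) * (k - padicValNat 2 (r x)) + r x,
    fun x => ⟨padicValNat 2 (r x) % k, Nat.mod_lt _ hk⟩, ?_, ?_⟩
  · intro x hx y hy hxy
    have h := congrArg (· % (B.card + 1)) hxy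
    have hx1 := (hr x hx).2
    have hy1 := (hr y hy).2
    simp only [Nat.mul_add_mod] at h
    rw [Nat.mod_eq_of_lt (by omega), Nat.mod_eq_of_lt (by omega)] at h
    exact hmono.injOn hx hy h
  · intro x hx y hy hxy hc
    have hc' : padicValNat 2 (r x) = padicValNat 2 (r y) := by
      have := congrArg Fin.val hc
      simpa only [Nat.mod_eq_of_lt (hv x hx), Nat.mod_eq_of_lt (hv y hy)] using this
    obtain ⟨l, hl1, hl2, hl3⟩ :=
      exists_between_padicValNat_lt (hr x hx).1 (hmono hx hy hxy) hc'
    obtain ⟨b, hb, rfl⟩ := hsurj l (by omega) (hl2.le.trans (hr y hy).2)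
    have key : ∀ z ∈ B, padicValNat 2 (r z) < padicValNat 2 (r b) →
        (B.card + 1) * (k - padicValNat 2 (r b)) + r b <
          (B.card + 1) * (k - padicValNat 2 (r z)) + r z := by
      intro z hz hlt
      have hbk := hv b hb
      have hb1 := (hr b hb).2
      have := Nat.mul_le_mul_left (B.card + 1)
        (show k - padicValNat 2 (r b) + 1 ≤ k - padicValNat 2 (r z) by omega)
      rw [mul_add, mul_one] at this
      omega
    exact ⟨b, hb, (hmono.lt_iff_lt hx hb).1 hl1, (hmono.lt_iff_lt hb hy).1 hl2,
      key x hx hl3, key y hy (hc' ▸ hl3)⟩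
end

section
/- Let ℐ be a finite nonempty set of bounded open intervals with nonempty common intersection (there is a real c contained in every interval of ℐ), such that no two intervals of ℐ overlap. Let A be the set of all endpoints of intervals in ℐ. Then |ℐ| ≤ |A| − 1. -/
/-- The number of points of `A` in the closed interval `[J.1, J.2]` is strictly larger for the
larger of two distinct nested intervals, provided the endpoints of the larger one lie in `A`. -/
theorem card_filter_lt_of_nested (A : Finset ℝ) (J K : ℝ × ℝ) (hJ : J.1 < J.2)
    (h1 : J.1 ∈ A) (h2 : J.2 ∈ A) (hl : J.1 ≤ K.1) (hr : K.2 ≤ J.2) (hne : J ≠ K) :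
    (A.filter fun x => K.1 ≤ x ∧ x ≤ K.2).card < (A.filter fun x => J.1 ≤ x ∧ x ≤ J.2).card := by
  apply Finset.card_lt_card
  rw [Finset.ssubset_iff_of_subset]
  · rcases hl.lt_or_eq with h | h
    · exact ⟨J.1, by simp [h1, hJ.le], by simp [h]⟩
    · have h' : K.2 < J.2 := lt_of_le_of_ne hr fun e => hne (Prod.ext h e.symm)
      exact ⟨J.2, by simp [h2, hJ.le], by simp [h']⟩
  · intro x hx
    simp only [Finset.mem_filter] at hx ⊢
    exact ⟨hx.1, hl.trans hx.2.1, hx.2.2.trans hr⟩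

/-- A finite nonempty set of pairwise non-overlapping intervals with a common point has at
most `|A| - 1` members, where `A` is the set of endpoints. -/
theorem no_overlap_common_point_bound (I : Finset (ℝ × ℝ)) (hne : I.Nonempty)
    (hlt : ∀ J ∈ I, J.1 < J.2) (c : ℝ) (hc : ∀ J ∈ I, J.1 < c ∧ c < J.2)
    (hno : ∀ J ∈ I, ∀ K ∈ I, ¬ Overlap J.1 J.2 K.1 K.2)
    (A : Finset ℝ) (hA : A = I.image Prod.fst ∪ I.image Prod.snd) :
    I.card ≤ A.card - 1 := by
  have hA1 : ∀ J ∈ I, J.1 ∈ A := fun J hJ => by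
    rw [hA]; exact Finset.mem_union_left _ (Finset.mem_image_of_mem _ hJ)
  have hA2 : ∀ J ∈ I, J.2 ∈ A := fun J hJ => by
    rw [hA]; exact Finset.mem_union_right _ (Finset.mem_image_of_mem _ hJ)
  have hnest : ∀ J ∈ I, ∀ K ∈ I, (J.1 ≤ K.1 ∧ K.2 ≤ J.2) ∨ (K.1 ≤ J.1 ∧ J.2 ≤ K.2) := by
    intro J hJ K hK
    have h := hno J hJ K hK
    have hJc := hc J hJ
    have hKc := hc K hK
    unfold Overlap at h
    by_contra! hcon
    rcases lt_trichotomy J.1 K.1 with hlt' | heq | hgt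
    · exact h (Or.inl ⟨hlt', hKc.1.trans hJc.2, hcon.1 hlt'.le⟩)
    · exact lt_asymm (hcon.1 heq.le) (hcon.2 heq.ge)
    · exact h (Or.inr ⟨hgt, hJc.1.trans hKc.2, hcon.2 hgt.le⟩)
  have hcard : I.card ≤ (Finset.Icc 2 A.card).card := by
    apply Finset.card_le_card_of_injOn
      (fun J : ℝ × ℝ => (A.filter fun x => J.1 ≤ x ∧ x ≤ J.2).card)
    · intro J hJ
      have hJ' : J ∈ I := hJ
      have hJlt := hlt J hJ'
      simp only [Finset.coe_Icc, Set.mem_Icc]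
      refine ⟨?_, Finset.card_filter_le _ _⟩
      rw [← Finset.card_pair hJlt.ne]
      apply Finset.card_le_card
      intro x hx
      rw [Finset.mem_insert, Finset.mem_singleton] at hx
      rcases hx with rfl | rfl
      · simp [hA1 J hJ', hJlt.le]
      · simp [hA2 J hJ', hJlt.le]
    · intro J hJ K hK heq
      have hJ' : J ∈ I := hJ
      have hK' : K ∈ I := hK
      by_contra hJK
      rcases hnest J hJ' K hK' with h | h
      · exact (card_filter_lt_of_nested A J K (hlt J hJ') (hA1 J hJ') (hA2 J hJ')
          h.1 h.2 hJK).ne' heq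
      · exact (card_filter_lt_of_nested A K J (hlt K hK') (hA1 K hK') (hA2 K hK')
          h.1 h.2 (Ne.symm hJK)).ne heq
  rw [Nat.card_Icc] at hcard
  omega
end

section
/- There exist a natural number n and a finite family (f_v)_{v ∈ Fin n} of interval filaments such that no family (P_v)_{v ∈ Fin n} of polygons inscribed in the unit circle satisfies, for all distinct u, v, that P_u ∩ P_v ≠ ∅ iff the curves of f_u and f_v intersect. (There is an interval filament graph which is not a polygon-circle graph.) -/
/-!
The graph has eight vertices: three pairwise disjoint sets `A₀, A₁, A₂`; for each pair of them a
"bridge" meeting those two but not the third; and two disjoint sets `X`, `Y`, each meeting all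
three `Aᵢ`. The remaining adjacencies are irrelevant.

As filaments, the `Aᵢ` are three tall narrow arches side by side, `X` and `Y` are two wide low
arches one above the other, two of the bridges join neighbouring arches, and the third bridge passes
above the middle arch. All of them are parabolas `k (x - a) (b - x)`.

Polygons inscribed in the unit circle cannot realise this. If `R` is such a polygon, then the
relation "the segment `[x, y]` misses `R`" is transitive on points of the closed disk
(`disjoint_segment_trans`), because each component of the disk minus `R` is convex. Following a
bridge between two of the `Aᵢ` therefore shows that every segment joining these two misses the third
(`disjoint_segment_of_bridge`). Now separate `X` from `Y` by a line. Each `Aᵢ` is convex and has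
points on both sides, so it contains a point of the line. Of these three collinear points one lies
between the other two, a contradiction (`no_polygon_representation`).
-/


/-- The curve of an interval filament `f` on domain `[a,b]`. -/
def FilCurve (a b : ℝ) (f : ℝ → ℝ) : Set (ℝ × ℝ) :=
  {p : ℝ × ℝ | p.1 ∈ Set.Icc a b ∧ p.2 = f p.1}

/-- A polygon inscribed in the unit circle: the convex hull of at least three points of
the unit circle. -/
def IsInscribedPolygon (P : Set (ℝ × ℝ)) : Prop :=
  ∃ s : Finset (ℝ × ℝ), 3 ≤ s.card ∧ (∀ p ∈ s, p.1 ^ 2 + p.2 ^ 2 = 1) ∧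
    P = convexHull ℝ (s : Set (ℝ × ℝ))

/-! ### Segments avoiding an inscribed polygon -/

/-- Twice the signed area of the triangle `p q r`. -/
def signedArea (p q r : ℝ × ℝ) : ℝ :=
  (q.1 - p.1) * (r.2 - p.2) - (q.2 - p.2) * (r.1 - p.1)

lemma segment_subset_union_of_signedArea_eq_zero {x y z : ℝ × ℝ} (h : signedArea x y z = 0) :
    segment ℝ x z ⊆ segment ℝ x y ∪ segment ℝ y z := by
  rintro r ⟨a, b, ha, hb, hab, rfl⟩
  obtain rfl : a = 1 - b := by linarith
  by_cases hxz : x = z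
  · subst hxz
    left
    rw [← add_smul, hab, one_smul]
    exact left_mem_segment ℝ x y
  have hd : 0 < (z.1 - x.1) ^ 2 + (z.2 - x.2) ^ 2 := by
    by_contra hn
    apply hxz
    ext <;> nlinarith [sq_nonneg (z.1 - x.1), sq_nonneg (z.2 - x.2)]
  -- the position of `y` on the line `x z`
  obtain ⟨t, ht1, ht2⟩ : ∃ t : ℝ, y.1 = x.1 + t * (z.1 - x.1) ∧ y.2 = x.2 + t * (z.2 - x.2) := by
    refine ⟨((y.1 - x.1) * (z.1 - x.1) + (y.2 - x.2) * (z.2 - x.2)) /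
      ((z.1 - x.1) ^ 2 + (z.2 - x.2) ^ 2), ?_, ?_⟩
    · field_simp
      unfold signedArea at h
      linear_combination (z.2 - x.2) * h
    · field_simp
      unfold signedArea at h
      linear_combination -(z.1 - x.1) * h
  rcases le_or_gt b t with hbt | hbt
  · left
    rcases hb.eq_or_lt with rfl | hb0
    · simpa using left_mem_segment ℝ x y
    have ht : 0 < t := hb0.trans_le hbt
    refine ⟨1 - b / t, b / t, sub_nonneg.2 ((div_le_one ht).2 hbt), by positivity, by ring, ?_⟩
    ext
    · simp [ht1]; field_simp; ring
    · simp [ht2]; field_simp; ring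
  · right
    have ht : 0 < 1 - t := by linarith
    refine ⟨1 - (b - t) / (1 - t), (b - t) / (1 - t), sub_nonneg.2 ((div_le_one ht).2 (by linarith)),
      div_nonneg (by linarith) ht.le, by ring, ?_⟩
    ext
    · simp [ht1]; field_simp; ring
    · simp [ht2]; field_simp; ring

/-- If `[x, z]` meets the polygon at `r`, some vertex `v` lies on the same side of the line `x z` as
`y`. As `v` is on the circle, it is not inside the triangle `x y z`, so the segment from `r` to `v`,
which stays in the polygon, leaves the triangle through `[x, y]` or `[y, z]`. -/
lemma disjoint_segment_trans {s : Set (ℝ × ℝ)} (hs : ∀ p ∈ s, p.1 ^ 2 + p.2 ^ 2 = 1)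
    {x y z : ℝ × ℝ} (hx : x.1 ^ 2 + x.2 ^ 2 ≤ 1) (hy : y.1 ^ 2 + y.2 ^ 2 ≤ 1)
    (hz : z.1 ^ 2 + z.2 ^ 2 ≤ 1) (hxy : Disjoint (segment ℝ x y) (convexHull ℝ s))
    (hyz : Disjoint (segment ℝ y z) (convexHull ℝ s)) :
    Disjoint (segment ℝ x z) (convexHull ℝ s) := by
  by_cases hD : signedArea x y z = 0
  · exact (hxy.union_left hyz).mono_left (segment_subset_union_of_signedArea_eq_zero hD)
  rw [Set.disjoint_left] at hxy hyz ⊢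
  intro r hr hrs
  obtain ⟨v, hv, hvβ⟩ : ∃ v ∈ s, 0 ≤ signedArea x v z / signedArea x y z := by
    by_contra! hcon
    have hconv : Convex ℝ {p | signedArea x p z / signedArea x y z < 0} := by
      intro p hp q hq c d hc hd hcd
      simp only [Set.mem_ofPred_eq] at hp hq ⊢
      have key : signedArea x (c • p + d • q) z / signedArea x y z =
          c * (signedArea x p z / signedArea x y z) +
            d * (signedArea x q z / signedArea x y z) := by
        obtain rfl : c = 1 - d := by linarith
        rw [← mul_div_assoc, ← mul_div_assoc, ← add_div]
        congr 1
        simp [signedArea]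
        ring
      rw [key]
      rcases hc.eq_or_lt with rfl | hc
      · have : d = 1 := by linarith
        subst this; linarith
      · nlinarith [mul_neg_of_pos_of_neg hc hp, mul_nonneg hd (neg_nonneg.2 hq.le)]
    have hr0 : signedArea x r z / signedArea x y z < 0 := convexHull_min hcon hconv hrs
    obtain ⟨a, b, -, -, hab, rfl⟩ := hr
    obtain rfl : a = 1 - b := by linarith
    have : signedArea x ((1 - b) • x + b • z) z = 0 := by simp [signedArea]; ring
    simp [this] at hr0
  -- barycentric coordinates of `v` in the triangle `x y z`
  obtain ⟨α, β, γ, hβ, hsum, rfl⟩ : ∃ α β γ : ℝ, 0 ≤ β ∧ α + β + γ = 1 ∧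
      α • x + β • y + γ • z = v := by
    refine ⟨signedArea v y z / signedArea x y z, _, signedArea x y v / signedArea x y z,
      hvβ, ?_, ?_⟩
    · rw [← add_div, ← add_div, div_eq_one_iff_eq hD]
      simp [signedArea]; ring
    · ext
      · simp only [Prod.fst_add, Prod.smul_fst, smul_eq_mul]
        field_simp
        simp [signedArea]; ring
      · simp only [Prod.snd_add, Prod.smul_snd, smul_eq_mul]
        field_simp
        simp [signedArea]; ring
  have hvR := subset_convexHull ℝ s hv
  have hvc := hs _ hv
  obtain ⟨a, b, ha, hb, hab, rfl⟩ := hr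
  have hseg : ∀ t : ℝ, 0 ≤ t → t ≤ 1 →
      (1 - t) • (a • x + b • z) + t • (α • x + β • y + γ • z) ∈ convexHull ℝ s := fun t h0 h1 =>
    convex_convexHull ℝ s hrs hvR (by linarith) h0 (by ring)
  by_cases hγ : γ < 0 ∧ γ * a ≤ b * α
  · obtain ⟨hγ, hle⟩ := hγ
    -- the parameter at which `[r, v]` crosses the line `x y`
    have hpos : 0 < b - γ := by linarith
    refine hxy ?_ (hseg (b / (b - γ)) (by positivity) ((div_le_one hpos).2 (by linarith)))
    refine ⟨(b * α - γ * a) / (b - γ), b * β / (b - γ), div_nonneg (by linarith) hpos.le,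
      by positivity, ?_, ?_⟩
    · field_simp
      linear_combination b * hsum - γ * hab
    · ext
      · simp; field_simp; ring
      · simp; field_simp; ring
  by_cases hα : α < 0 ∧ α * b ≤ a * γ
  · obtain ⟨hα, hle⟩ := hα
    have hpos : 0 < a - α := by linarith
    refine hyz ?_ (hseg (a / (a - α)) (by positivity) ((div_le_one hpos).2 (by linarith)))
    refine ⟨a * β / (a - α), (a * γ - α * b) / (a - α), by positivity,
      div_nonneg (by linarith) hpos.le, ?_, ?_⟩
    · field_simp
      linear_combination a * hsum - α * hab
    · ext
      · simp; field_simp; ring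
      · simp; field_simp; ring
  have hα0 : 0 ≤ α := by
    by_contra! hneg
    push Not at hγ hα
    have h1 := hα hneg
    have h2 : γ < 0 := by
      by_contra! h
      nlinarith [mul_nonneg ha h, mul_nonneg hb (neg_nonneg.2 hneg.le)]
    nlinarith [hγ h2]
  have hγ0 : 0 ≤ γ := by
    by_contra! hneg
    push Not at hγ
    nlinarith [hγ hneg, mul_nonneg ha (neg_nonneg.2 hneg.le), mul_nonneg hb hα0]
  -- Now `v` is in the triangle and on the circle; by strict convexity of the disk it is a corner.
  have hexp : α * β * ((x.1 - y.1) ^ 2 + (x.2 - y.2) ^ 2) +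
      β * γ * ((y.1 - z.1) ^ 2 + (y.2 - z.2) ^ 2) +
      α * γ * ((x.1 - z.1) ^ 2 + (x.2 - z.2) ^ 2) ≤ 0 := by
    have hid : α * β * ((x.1 - y.1) ^ 2 + (x.2 - y.2) ^ 2) +
        β * γ * ((y.1 - z.1) ^ 2 + (y.2 - z.2) ^ 2) +
        α * γ * ((x.1 - z.1) ^ 2 + (x.2 - z.2) ^ 2) =
        α * (x.1 ^ 2 + x.2 ^ 2) + β * (y.1 ^ 2 + y.2 ^ 2) + γ * (z.1 ^ 2 + z.2 ^ 2) - 1 := by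
      simp only [Prod.fst_add, Prod.snd_add, Prod.smul_fst, Prod.smul_snd, smul_eq_mul] at hvc
      obtain rfl : α = 1 - β - γ := by linarith
      linear_combination -hvc
    linarith [mul_le_mul_of_nonneg_left hx hα0, mul_le_mul_of_nonneg_left hy hβ,
      mul_le_mul_of_nonneg_left hz hγ0]
  have hne : ∀ p q : ℝ × ℝ, p ≠ q → 0 < (p.1 - q.1) ^ 2 + (p.2 - q.2) ^ 2 := by
    intro p q hpq
    by_contra hn
    apply hpq
    ext <;> nlinarith [sq_nonneg (p.1 - q.1), sq_nonneg (p.2 - q.2)]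
  have h1 := hne x y (by rintro rfl; apply hD; simp [signedArea])
  have h2 := hne y z (by rintro rfl; apply hD; simp [signedArea]; ring)
  have h3 := hne x z (by rintro rfl; apply hD; simp [signedArea])
  have hαβ := mul_nonneg hα0 hβ
  have hβγ := mul_nonneg hβ hγ0
  have hαγ := mul_nonneg hα0 hγ0
  have m1 := mul_nonneg hαβ h1.le
  have m2 := mul_nonneg hβγ h2.le
  have m3 := mul_nonneg hαγ h3.le
  have e1 : α * β = 0 := (mul_eq_zero.1 (by linarith :
    α * β * ((x.1 - y.1) ^ 2 + (x.2 - y.2) ^ 2) = 0)).resolve_right h1.ne'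
  have e2 : β * γ = 0 := (mul_eq_zero.1 (by linarith :
    β * γ * ((y.1 - z.1) ^ 2 + (y.2 - z.2) ^ 2) = 0)).resolve_right h2.ne'
  have e3 : α * γ = 0 := (mul_eq_zero.1 (by linarith :
    α * γ * ((x.1 - z.1) ^ 2 + (x.2 - z.2) ^ 2) = 0)).resolve_right h3.ne'
  rcases mul_eq_zero.1 e3 with rfl | rfl
  · exact hyz ⟨β, γ, hβ, hγ0, by linarith, by simp⟩ hvR
  · exact hxy ⟨α, β, hα0, hβ, by linarith, by simp⟩ hvR

/-! ### The graph has no polygon representation -/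

lemma IsInscribedPolygon.convex {P : Set (ℝ × ℝ)} (h : IsInscribedPolygon P) : Convex ℝ P := by
  obtain ⟨s, -, -, rfl⟩ := h
  exact convex_convexHull ℝ _

lemma IsInscribedPolygon.isCompact {P : Set (ℝ × ℝ)} (h : IsInscribedPolygon P) : IsCompact P := by
  obtain ⟨s, -, -, rfl⟩ := h
  exact s.finite_toSet.isCompact_convexHull ℝ

lemma IsInscribedPolygon.sq_add_sq_le_one {P : Set (ℝ × ℝ)} (h : IsInscribedPolygon P)
    {p : ℝ × ℝ} (hp : p ∈ P) : p.1 ^ 2 + p.2 ^ 2 ≤ 1 := by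
  obtain ⟨s, -, hs, rfl⟩ := h
  have hconv : Convex ℝ {p : ℝ × ℝ | p.1 ^ 2 + p.2 ^ 2 ≤ 1} := by
    intro p hp q hq c d hc hd hcd
    simp only [Set.mem_ofPred_eq, Prod.fst_add, Prod.snd_add, Prod.smul_fst, Prod.smul_snd,
      smul_eq_mul] at hp hq ⊢
    obtain rfl : c = 1 - d := by linarith
    nlinarith [mul_nonneg (mul_nonneg hc hd) (sq_nonneg (p.1 - q.1)),
      mul_nonneg (mul_nonneg hc hd) (sq_nonneg (p.2 - q.2)),
      mul_le_mul_of_nonneg_left hp hc, mul_le_mul_of_nonneg_left hq hd]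
  exact convexHull_min (fun q hq => (hs q hq).le) hconv hp

/-- Apply `disjoint_segment_trans` twice along the path from `p` to `A ∩ B`, on to `B ∩ C`, and on to
`q`, whose three segments lie in `A`, `B` and `C`. -/
lemma disjoint_segment_of_bridge {A B C R : Set (ℝ × ℝ)} (hA : IsInscribedPolygon A)
    (hB : IsInscribedPolygon B) (hC : IsInscribedPolygon C) (hR : IsInscribedPolygon R)
    (hAB : (B ∩ A).Nonempty) (hBC : (B ∩ C).Nonempty) (hAR : Disjoint A R) (hBR : Disjoint B R)
    (hCR : Disjoint C R) {p q : ℝ × ℝ} (hp : p ∈ A) (hq : q ∈ C) :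
    Disjoint (segment ℝ p q) R := by
  obtain ⟨u, huB, huA⟩ := hAB
  obtain ⟨w, hwB, hwC⟩ := hBC
  have h1 := hAR.mono_left (hA.convex.segment_subset hp huA)
  have h2 := hBR.mono_left (hB.convex.segment_subset huB hwB)
  have h3 := hCR.mono_left (hC.convex.segment_subset hwC hq)
  have p' := hA.sq_add_sq_le_one hp
  have u' := hA.sq_add_sq_le_one huA
  have w' := hC.sq_add_sq_le_one hwC
  have q' := hC.sq_add_sq_le_one hq
  obtain ⟨s, -, hs, rfl⟩ := hR
  exact disjoint_segment_trans hs p' w' q' (disjoint_segment_trans hs p' u' w' h1 h2) h3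

lemma collinear_of_map_eq (g : ℝ × ℝ →L[ℝ] ℝ) (hg : g ≠ 0) (c : ℝ) {x y z : ℝ × ℝ}
    (hx : g x = c) (hy : g y = c) (hz : g z = c) : Collinear ℝ {x, y, z} := by
  have hform : ∀ p : ℝ × ℝ, g p = p.1 * g (1, 0) + p.2 * g (0, 1) := by
    intro p
    have : p = p.1 • ((1, 0) : ℝ × ℝ) + p.2 • ((0, 1) : ℝ × ℝ) := by ext <;> simp
    conv_lhs => rw [this]
    simp only [map_add, map_smul, smul_eq_mul]
  set k := g (1, 0)
  set l := g (0, 1)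
  have hpos : 0 < k ^ 2 + l ^ 2 := by
    by_contra hn
    apply hg
    have hk : k = 0 := by nlinarith [sq_nonneg k, sq_nonneg l]
    have hl : l = 0 := by nlinarith [sq_nonneg k, sq_nonneg l]
    ext <;> simp [hform, hk, hl]
  rw [collinear_iff_of_mem (p₀ := x) (by simp)]
  refine ⟨(-l, k), fun p hp => ⟨(-l * (p.1 - x.1) + k * (p.2 - x.2)) / (k ^ 2 + l ^ 2), ?_⟩⟩
  have hpc : g p = g x := by
    rcases hp with rfl | rfl | rfl
    exacts [rfl, hy.trans hx.symm, hz.trans hx.symm]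
  rw [hform p, hform x] at hpc
  ext
  · simp; field_simp; linear_combination k * hpc
  · simp; field_simp; linear_combination l * hpc

/-- A convex set with points on both sides of a line contains a point of the line. -/
lemma exists_mem_map_eq {A X Y : Set (ℝ × ℝ)} (hA : Convex ℝ A) (g : ℝ × ℝ →L[ℝ] ℝ) (c : ℝ)
    (hX : ∀ p ∈ X, g p < c) (hY : ∀ p ∈ Y, c < g p) (hXA : (X ∩ A).Nonempty)
    (hYA : (Y ∩ A).Nonempty) : ∃ p ∈ A, g p = c := by
  obtain ⟨x, hx, hxA⟩ := hXA
  obtain ⟨y, hy, hyA⟩ := hYA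
  obtain ⟨p, hp, hpc⟩ := hA.isPreconnected.intermediate_value hxA hyA g.continuous.continuousOn
    ⟨(hX x hx).le, (hY y hy).le⟩
  exact ⟨p, hp, hpc⟩

/-- `Bᵢⱼ` is the bridge between `Aᵢ` and `Aⱼ`. A line separating `X` from `Y` meets every `Aᵢ`, and one
of the three points obtained lies between the other two. -/
lemma no_polygon_representation {A₀ A₁ A₂ B₀₁ B₁₂ B₀₂ X Y : Set (ℝ × ℝ)}
    (hA₀ : IsInscribedPolygon A₀) (hA₁ : IsInscribedPolygon A₁) (hA₂ : IsInscribedPolygon A₂)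
    (hB₀₁ : IsInscribedPolygon B₀₁) (hB₁₂ : IsInscribedPolygon B₁₂) (hB₀₂ : IsInscribedPolygon B₀₂)
    (hX : IsInscribedPolygon X) (hY : IsInscribedPolygon Y)
    (d₀₁ : Disjoint A₀ A₁) (d₀₂ : Disjoint A₀ A₂) (d₁₂ : Disjoint A₁ A₂)
    (b₀₁ : Disjoint B₀₁ A₂) (b₁₂ : Disjoint B₁₂ A₀) (b₀₂ : Disjoint B₀₂ A₁) (hXY : Disjoint X Y)
    (i₀ : (B₀₁ ∩ A₀).Nonempty) (i₁ : (B₀₁ ∩ A₁).Nonempty) (j₁ : (B₁₂ ∩ A₁).Nonempty)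
    (j₂ : (B₁₂ ∩ A₂).Nonempty) (k₀ : (B₀₂ ∩ A₀).Nonempty) (k₂ : (B₀₂ ∩ A₂).Nonempty)
    (x₀ : (X ∩ A₀).Nonempty) (x₁ : (X ∩ A₁).Nonempty) (x₂ : (X ∩ A₂).Nonempty)
    (y₀ : (Y ∩ A₀).Nonempty) (y₁ : (Y ∩ A₁).Nonempty) (y₂ : (Y ∩ A₂).Nonempty) : False := by
  obtain ⟨g, u, w, hu, huw, hw⟩ := geometric_hahn_banach_compact_closed hX.convex hX.isCompact
    hY.convex hY.isCompact.isClosed hXY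
  have hw' : ∀ p ∈ Y, u < g p := fun p hp => huw.trans (hw p hp)
  obtain ⟨p, hp, hpu⟩ := exists_mem_map_eq hA₀.convex g u hu hw' x₀ y₀
  obtain ⟨q, hq, hqu⟩ := exists_mem_map_eq hA₁.convex g u hu hw' x₁ y₁
  obtain ⟨r, hr, hru⟩ := exists_mem_map_eq hA₂.convex g u hu hw' x₂ y₂
  have hg : g ≠ 0 := by
    rintro rfl
    obtain ⟨a, ha, -⟩ := x₀
    obtain ⟨b, hb, -⟩ := y₀
    have := hu a ha
    have := hw' b hb
    simp at *
    linarith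
  rcases (collinear_of_map_eq g hg u hpu hqu hru).wbtw_or_wbtw_or_wbtw with h | h | h
  · exact Set.disjoint_left.1 (disjoint_segment_of_bridge hA₀ hB₀₂ hA₂ hA₁ k₀ k₂ d₀₁ b₀₂ d₁₂.symm
      hp hr) (mem_segment_iff_wbtw.2 h) hq
  · exact Set.disjoint_left.1 (disjoint_segment_of_bridge hA₁ hB₀₁ hA₀ hA₂ i₁ i₀ d₁₂ b₀₁ d₀₂
      hq hp) (mem_segment_iff_wbtw.2 h) hr
  · exact Set.disjoint_left.1 (disjoint_segment_of_bridge hA₂ hB₁₂ hA₁ hA₀ j₂ j₁ d₀₂.symm b₁₂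
      d₀₁.symm hr hq) (mem_segment_iff_wbtw.2 h) hp

/-! ### The filaments -/

/-- The parabolic arch over `[a, b]` with leading coefficient `-k`. -/
def arch (k a b x : ℝ) : ℝ := k * ((x - a) * (b - x))

lemma continuous_arch (k a b : ℝ) : Continuous (arch k a b) := by
  unfold arch
  fun_prop

/-- Two filaments intersect if each is at least as high as the other somewhere in the common part of
their domains; here `c` and `d` are two such places. -/
lemma filCurve_arch_inter {k a b k' a' b' : ℝ} (c d : ℝ) (hc : c ∈ Set.Icc a b)
    (hc' : c ∈ Set.Icc a' b') (hd : d ∈ Set.Icc a b) (hd' : d ∈ Set.Icc a' b')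
    (h1 : arch k a b c ≤ arch k' a' b' c) (h2 : arch k' a' b' d ≤ arch k a b d) :
    (FilCurve a b (arch k a b) ∩ FilCurve a' b' (arch k' a' b')).Nonempty := by
  obtain ⟨x, hx, hx'⟩ := isPreconnected_uIcc.intermediate_value₂ Set.left_mem_uIcc
    Set.right_mem_uIcc (continuous_arch k a b).continuousOn
    (continuous_arch k' a' b').continuousOn h1 h2
  exact ⟨(x, arch k a b x), ⟨Set.uIcc_subset_Icc hc hd hx, rfl⟩,
    ⟨Set.uIcc_subset_Icc hc' hd' hx, hx'⟩⟩

lemma filCurve_inter_eq_empty {a b a' b' : ℝ} {f f' : ℝ → ℝ}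
    (h : ∀ x, a ≤ x → x ≤ b → a' ≤ x → x ≤ b' → f x ≠ f' x) :
    ¬ (FilCurve a b f ∩ FilCurve a' b' f').Nonempty := by
  rintro ⟨p, ⟨⟨h1, h2⟩, h3⟩, ⟨h4, h5⟩, h6⟩
  exact h p.1 h1 h2 h4 h5 (h3.symm.trans h6)

/-- There is an interval filament graph which is not a polygon-circle graph. -/
theorem interval_filament_not_polygon_circle :
    ∃ (n : ℕ) (a b : Fin n → ℝ) (f : Fin n → ℝ → ℝ),
      (∀ v, a v < b v) ∧
      (∀ v, ContinuousOn (f v) (Set.Icc (a v) (b v))) ∧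
      (∀ v, ∀ x ∈ Set.Icc (a v) (b v), 0 ≤ f v x) ∧
      (∀ v, f v (a v) = 0 ∧ f v (b v) = 0) ∧
      ∀ P : Fin n → Set (ℝ × ℝ), (∀ v, IsInscribedPolygon (P v)) →
        ¬ (∀ u v : Fin n, u ≠ v →
            ((P u ∩ P v).Nonempty ↔
              (FilCurve (a u) (b u) (f u) ∩ FilCurve (a v) (b v) (f v)).Nonempty)) := by
  -- Indices `0, 1, 2` are the tall arches, `3, 4, 5` the bridges `01`, `12`, `02`, and `6, 7` the
  -- two wide arches, `6` above `7`.
  let a : Fin 8 → ℝ := ![-5, -1, 3, -4, 0, -4, -7, -6]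
  let b : Fin 8 → ℝ := ![-3, 1, 5, 0, 4, 4, 7, 6]
  let k : Fin 8 → ℝ := ![200, 200, 200, 1, 1, 20, 2, 1]
  have hk : ∀ v, 0 ≤ k v := by intro v; fin_cases v <;> simp [k]
  refine ⟨8, a, b, fun v => arch (k v) (a v) (b v), ?_, fun v => (continuous_arch _ _ _).continuousOn,
    fun v x hx => mul_nonneg (hk v) (mul_nonneg (sub_nonneg.2 hx.1) (sub_nonneg.2 hx.2)),
    fun v => by simp [arch], ?_⟩
  · intro v
    fin_cases v <;> norm_num [a, b]
  intro P hP H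
  have meet : ∀ u v : Fin 8, u ≠ v → ∀ c d : ℝ, c ∈ Set.Icc (a u) (b u) → c ∈ Set.Icc (a v) (b v) →
      d ∈ Set.Icc (a u) (b u) → d ∈ Set.Icc (a v) (b v) →
      arch (k u) (a u) (b u) c ≤ arch (k v) (a v) (b v) c →
      arch (k v) (a v) (b v) d ≤ arch (k u) (a u) (b u) d → (P u ∩ P v).Nonempty :=
    fun u v huv c d h1 h2 h3 h4 h5 h6 => (H u v huv).2 (filCurve_arch_inter c d h1 h2 h3 h4 h5 h6)
  have miss : ∀ u v : Fin 8, u ≠ v → (∀ x, a u ≤ x → x ≤ b u → a v ≤ x → x ≤ b v →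
      arch (k u) (a u) (b u) x ≠ arch (k v) (a v) (b v) x) → Disjoint (P u) (P v) :=
    fun u v huv h => Set.disjoint_iff_inter_eq_empty.2 <| Set.not_nonempty_iff_eq_empty.1 fun hne =>
      filCurve_inter_eq_empty h ((H u v huv).1 hne)
  apply no_polygon_representation (hP 0) (hP 1) (hP 2) (hP 3) (hP 4) (hP 5) (hP 6) (hP 7)
  -- the disjoint pairs with disjoint domains
  iterate 5
    · apply miss _ _ (by decide)
      intro x h1 h2 h3 h4
      simp only [a, b, Matrix.cons_val] at h1 h2 h3 h4
      linarith
  -- the bridge `02` passes above the middle arch, and the wide arch `6` above `7`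
  · apply miss _ _ (by decide)
    intro x h1 h2 h3 h4
    simp only [a, b, k, arch, Matrix.cons_val] at h1 h2 h3 h4 ⊢
    intro h
    nlinarith [sq_nonneg x]
  · apply miss _ _ (by decide)
    intro x h1 h2 h3 h4
    simp only [a, b, k, arch, Matrix.cons_val] at h1 h2 h3 h4 ⊢
    intro h
    nlinarith
  -- the intersecting pairs, each with a point of comparison in either direction
  · apply meet _ _ (by decide) (-4) (-3) <;>
      simp only [a, b, k, arch, Matrix.cons_val, Set.mem_Icc] <;> norm_num
  · apply meet _ _ (by decide) 0 (-1) <;>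
      simp only [a, b, k, arch, Matrix.cons_val, Set.mem_Icc] <;> norm_num
  · apply meet _ _ (by decide) 0 1 <;>
      simp only [a, b, k, arch, Matrix.cons_val, Set.mem_Icc] <;> norm_num
  · apply meet _ _ (by decide) 4 3 <;>
      simp only [a, b, k, arch, Matrix.cons_val, Set.mem_Icc] <;> norm_num
  · apply meet _ _ (by decide) (-4) (-3) <;>
      simp only [a, b, k, arch, Matrix.cons_val, Set.mem_Icc] <;> norm_num
  · apply meet _ _ (by decide) 4 3 <;>
      simp only [a, b, k, arch, Matrix.cons_val, Set.mem_Icc] <;> norm_num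
  · apply meet _ _ (by decide) (-4) (-3) <;>
      simp only [a, b, k, arch, Matrix.cons_val, Set.mem_Icc] <;> norm_num
  · apply meet _ _ (by decide) 0 1 <;>
      simp only [a, b, k, arch, Matrix.cons_val, Set.mem_Icc] <;> norm_num
  · apply meet _ _ (by decide) 4 3 <;>
      simp only [a, b, k, arch, Matrix.cons_val, Set.mem_Icc] <;> norm_num
  · apply meet _ _ (by decide) (-4) (-3) <;>
      simp only [a, b, k, arch, Matrix.cons_val, Set.mem_Icc] <;> norm_num
  · apply meet _ _ (by decide) 0 1 <;>
      simp only [a, b, k, arch, Matrix.cons_val, Set.mem_Icc] <;> norm_num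
  · apply meet _ _ (by decide) 4 3 <;>
      simp only [a, b, k, arch, Matrix.cons_val, Set.mem_Icc] <;> norm_num
end

section
/- There exists a flat L-collection (L_v)_{v ∈ Fin n} such that no family (f_v)_{v ∈ Fin n} of interval filaments satisfies, for all distinct u, v, that the curves of f_u and f_v intersect iff L_u ∩ L_v ≠ ∅. (There is a flat grounded L-graph which is not an interval filament graph.) -/
/-! ### Filaments -/

/-- The filament `f` on `[a, b]` lies strictly below the filament `g` on `[c, d]`, and `[a, b]` is
contained in the open interval `(c, d)`. -/
def Below (a b : ℝ) (f : ℝ → ℝ) (c d : ℝ) (g : ℝ → ℝ) : Prop :=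
  c < a ∧ b < d ∧ ∀ x ∈ Set.Icc a b, f x < g x

lemma filCurve_inter_nonempty {a b c d x : ℝ} {f g : ℝ → ℝ}
    (hx : x ∈ Set.Icc a b) (hx' : x ∈ Set.Icc c d) (h : f x = g x) :
    (FilCurve a b f ∩ FilCurve c d g).Nonempty :=
  ⟨(x, f x), ⟨hx, rfl⟩, ⟨hx', h⟩⟩

lemma exists_filCurve_of_nonempty {a b c d : ℝ} {f g : ℝ → ℝ}
    (h : (FilCurve a b f ∩ FilCurve c d g).Nonempty) :
    ∃ x, x ∈ Set.Icc a b ∧ x ∈ Set.Icc c d ∧ f x = g x := by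
  obtain ⟨p, ⟨h1, h2⟩, ⟨h3, h4⟩⟩ := h
  exact ⟨p.1, h1, h3, h2.symm.trans h4⟩

/-- Two functions that change order between `p` and `q` meet on `[p, q]`. -/
lemma exists_eq_of_cross {p q : ℝ} (hpq : p ≤ q) {f g : ℝ → ℝ}
    (hf : ContinuousOn f (Set.Icc p q)) (hg : ContinuousOn g (Set.Icc p q))
    (hp : g p ≤ f p) (hq : f q ≤ g q) : ∃ x ∈ Set.Icc p q, f x = g x := by
  obtain ⟨x, hx, h⟩ := isPreconnected_Icc.intermediate_value₂ (Set.left_mem_Icc.2 hpq)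
    (Set.right_mem_Icc.2 hpq) hg hf hp hq
  exact ⟨x, hx, h.symm⟩

/-- Filaments with properly overlapping domains meet. -/
lemma meet_of_overlap {a b c d : ℝ} {f g : ℝ → ℝ}
    (hf : ContinuousOn f (Set.Icc a b)) (hg : ContinuousOn g (Set.Icc c d))
    (f0 : ∀ x ∈ Set.Icc a b, 0 ≤ f x) (g0 : ∀ x ∈ Set.Icc c d, 0 ≤ g x)
    (fb : f b = 0) (gc : g c = 0) (h1 : a ≤ c) (h2 : c ≤ b) (h3 : b ≤ d) :
    (FilCurve a b f ∩ FilCurve c d g).Nonempty := by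
  obtain ⟨x, hx, h⟩ := exists_eq_of_cross h2
    (hf.mono (Set.Icc_subset_Icc h1 le_rfl)) (hg.mono (Set.Icc_subset_Icc le_rfl h3))
    (by rw [gc]; exact f0 c ⟨h1, h2⟩) (by rw [fb]; exact g0 b ⟨h2, h3⟩)
  exact filCurve_inter_nonempty ⟨h1.trans hx.1, hx.2⟩ ⟨hx.1, hx.2.trans h3⟩ h

/-- If the curves do not meet and the domain of `g` is inside that of `f`, then `g` is
below `f`. -/
lemma below_of_nested {a b c d : ℝ} {f g : ℝ → ℝ}
    (hf : ContinuousOn f (Set.Icc a b)) (hg : ContinuousOn g (Set.Icc c d))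
    (f0 : ∀ x ∈ Set.Icc a b, 0 ≤ f x) (gc : g c = 0)
    (h1 : a < c) (h2 : d < b)
    (hn : ¬ (FilCurve a b f ∩ FilCurve c d g).Nonempty) : Below c d g a b f := by
  refine ⟨h1, h2, fun x hx => ?_⟩
  by_contra! hle
  obtain ⟨y, hy, h⟩ := exists_eq_of_cross hx.1
    (hf.mono (Set.Icc_subset_Icc h1.le (hx.2.trans h2.le)))
    (hg.mono (Set.Icc_subset_Icc le_rfl hx.2))
    (by rw [gc]; exact f0 c ⟨h1.le, (hx.1.trans hx.2).trans h2.le⟩) hle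
  exact hn (filCurve_inter_nonempty ⟨h1.le.trans hy.1, (hy.2.trans hx.2).trans h2.le⟩
    ⟨hy.1, hy.2.trans hx.2⟩ h)

lemma filament_trichotomy {a b c d : ℝ} {f g : ℝ → ℝ} (hab : a < b)
    (hf : ContinuousOn f (Set.Icc a b)) (hg : ContinuousOn g (Set.Icc c d))
    (f0 : ∀ x ∈ Set.Icc a b, 0 ≤ f x) (g0 : ∀ x ∈ Set.Icc c d, 0 ≤ g x)
    (fa : f a = 0) (fb : f b = 0) (gc : g c = 0) (gd : g d = 0)
    (hn : ¬ (FilCurve a b f ∩ FilCurve c d g).Nonempty) :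
    (b < c ∨ d < a) ∨ Below a b f c d g ∨ Below c d g a b f := by
  by_contra! h
  obtain ⟨⟨h1, h2⟩, h3, h4⟩ := h
  have hn' : ¬ (FilCurve c d g ∩ FilCurve a b f).Nonempty := by rwa [Set.inter_comm]
  rcases lt_trichotomy a c with hac | hac | hac
  · rcases le_or_gt b d with hbd | hbd
    · exact hn (meet_of_overlap hf hg f0 g0 fb gc hac.le h1 hbd)
    · exact h4 (below_of_nested hf hg f0 gc hac hbd hn)
  · exact hn (filCurve_inter_nonempty (x := a) ⟨le_rfl, hab.le⟩ ⟨hac.ge, h2⟩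
      (by rw [fa, hac, gc]))
  · rcases le_or_gt d b with hbd | hbd
    · exact hn' (meet_of_overlap hg hf g0 f0 gd fa hac.le h2 hbd)
    · exact h3 (below_of_nested hg hf g0 fa hac hbd hn')

lemma Below.trans {a b c d s t : ℝ} {f g k : ℝ → ℝ}
    (h : Below a b f c d g) (h' : Below c d g s t k) : Below a b f s t k :=
  ⟨h'.1.trans h.1, h.2.1.trans h'.2.1, fun x hx => (h.2.2 x hx).trans
    (h'.2.2 x ⟨h.1.le.trans hx.1, hx.2.trans h.2.1.le⟩)⟩

/-! ### The collection of L-shapes -/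

/-- Left endpoints. -/
def coL : Fin 9 → ℕ := ![0, 1, 2, 3, 4, 5, 7, 9, 12]

/-- Right endpoints. -/
def coR : Fin 9 → ℕ := ![13, 6, 11, 8, 17, 10, 14, 15, 16]

/-- Heights. -/
def coH : Fin 9 → ℕ := ![6, 2, 5, 1, 9, 4, 3, 8, 7]

/-- The vertical segment of `v` crosses the horizontal segment of `u`. -/
def cross (u v : Fin 9) : Bool :=
  decide (coL u < coL v) && decide (coL v ≤ coR u) && decide (coH u < coH v)

/-- Adjacency in the intersection graph of the collection. -/
def adj (u v : Fin 9) : Bool := cross u v || cross v u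

/-- Distinct and non-adjacent vertices. -/
def nonadj (u v : Fin 9) : Bool := decide (u ≠ v) && !adj u v

lemma LShape_inter_nonempty_iff {l r h l' r' h' : ℝ} (h0 : 0 < h) (h0' : 0 < h')
    (hl : l ≠ l') (hh : h ≠ h') :
    (LShape l r h ∩ LShape l' r' h').Nonempty ↔
      (l < l' ∧ l' ≤ r ∧ h < h') ∨ (l' < l ∧ l ≤ r' ∧ h' < h) := by
  constructor
  · rintro ⟨⟨x, y⟩, h1, h2⟩
    simp only [LShape, Set.mem_union, Set.mem_prod, Set.mem_singleton_iff, Set.mem_Icc] at h1 h2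
    rcases h1 with ⟨rfl, h1⟩ | ⟨h1, rfl⟩ <;> rcases h2 with ⟨rfl, h2⟩ | ⟨h2, rfl⟩
    · exact absurd rfl hl
    · exact Or.inr ⟨lt_of_le_of_ne h2.1 hl.symm, h2.2, lt_of_le_of_ne h1.2 hh.symm⟩
    · exact Or.inl ⟨lt_of_le_of_ne h1.1 hl, h1.2, lt_of_le_of_ne h2.2 hh⟩
    · exact absurd rfl hh
  · rintro (⟨h1, h2, h3⟩ | ⟨h1, h2, h3⟩)
    · exact ⟨(l', h), Or.inr ⟨⟨h1.le, h2⟩, rfl⟩, Or.inl ⟨rfl, h0.le, h3.le⟩⟩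
    · exact ⟨(l, h'), Or.inl ⟨rfl, h0'.le, h3.le⟩, Or.inr ⟨⟨h1.le, h2⟩, rfl⟩⟩

lemma coH_pos : ∀ v, 0 < coH v := by decide

lemma co_distinct : ∀ u v, u ≠ v →
    coL u ≠ coL v ∧ coL u ≠ coR v ∧ coR u ≠ coL v ∧ coR u ≠ coR v ∧ coH u ≠ coH v := by
  decide

lemma LShape_meet_iff (u v : Fin 9) (huv : u ≠ v) :
    (LShape (coL u) (coR u) (coH u) ∩ LShape (coL v) (coR v) (coH v)).Nonempty ↔
      adj u v = true := by
  have hd := co_distinct u v huv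
  rw [LShape_inter_nonempty_iff (by exact_mod_cast coH_pos u) (by exact_mod_cast coH_pos v)
    (by exact_mod_cast hd.1) (by exact_mod_cast hd.2.2.2.2)]
  simp [adj, cross, and_assoc]

lemma adj_symm : ∀ u v, adj u v = true → adj v u = true := by decide

lemma nonadj_symm : ∀ u v, nonadj u v = true → nonadj v u = true := by decide

/-- For `u ≠ 7`, some non-neighbour `c` of `u` is reached from each non-neighbour of `u` in at
most two steps through non-neighbours of `u`. -/
lemma nonadj_connected : ∀ u, u ≠ 7 → ∃ c, nonadj u c = true ∧ ∀ v, nonadj u v = true →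
    ∃ x, nonadj u x = true ∧ (v = x ∨ adj v x = true) ∧ (x = c ∨ adj x c = true) := by
  decide

/-! ### The combinatorial contradiction -/

/-- The intervals `[a u, b u]` and `[a v, b v]` are disjoint. -/
def Apart (a b : Fin 9 → ℝ) (u v : Fin 9) : Prop := b u < a v ∨ b v < a u

lemma no_four_cycle {a b : Fin 9 → ℝ}
    (hadj : ∀ u v, adj u v = true → a u ≤ b v) (x y z w : Fin 9)
    (hc : (adj x y && adj y z && adj z w && adj w x) = true)
    (h1 : Apart a b x z) (h2 : Apart a b y w) : False := by
  simp only [Bool.and_eq_true] at hc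
  obtain ⟨⟨⟨hxy, hyz⟩, hzw⟩, hwx⟩ := hc
  have e1 := hadj _ _ hxy
  have e2 := hadj _ _ hyz
  have e3 := hadj _ _ hzw
  have e4 := hadj _ _ hwx
  have e5 := hadj _ _ (adj_symm _ _ hxy)
  have e6 := hadj _ _ (adj_symm _ _ hyz)
  have e7 := hadj _ _ (adj_symm _ _ hzw)
  have e8 := hadj _ _ (adj_symm _ _ hwx)
  rcases h1 with h1 | h1 <;> rcases h2 with h2 | h2 <;> linarith

lemma no_five_cycle {a b : Fin 9 → ℝ}
    (hadj : ∀ u v, adj u v = true → a u ≤ b v) (x y z w t : Fin 9)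
    (hc : (adj x y && adj y z && adj z w && adj w t && adj t x) = true)
    (h1 : Apart a b x z) (h2 : Apart a b y w) (h3 : Apart a b z t) (h4 : Apart a b w x)
    (h5 : Apart a b t y) : False := by
  simp only [Bool.and_eq_true] at hc
  obtain ⟨⟨⟨⟨hxy, hyz⟩, hzw⟩, hwt⟩, htx⟩ := hc
  have e1 := hadj _ _ hxy
  have e2 := hadj _ _ hyz
  have e3 := hadj _ _ hzw
  have e4 := hadj _ _ hwt
  have e5 := hadj _ _ htx
  have f1 := hadj _ _ (adj_symm _ _ hxy)
  have f2 := hadj _ _ (adj_symm _ _ hyz)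
  have f3 := hadj _ _ (adj_symm _ _ hzw)
  have f4 := hadj _ _ (adj_symm _ _ hwt)
  have f5 := hadj _ _ (adj_symm _ _ htx)
  rcases h1 with h1 | h1 <;> rcases h2 with h2 | h2 <;> rcases h3 with h3 | h3 <;>
    rcases h4 with h4 | h4 <;> rcases h5 with h5 | h5 <;> linarith

/-- There are no intervals `[a v, b v]` and strict order `C` refining strict containment of
intervals such that adjacent vertices have intersecting intervals and are `C`-incomparable, while
non-adjacent vertices have disjoint intervals or are `C`-comparable. -/
lemma no_model (a b : Fin 9 → ℝ) (C : Fin 9 → Fin 9 → Prop)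
    (htrans : ∀ u v w, C u v → C v w → C u w)
    (hsub : ∀ u v, C u v → a v < a u ∧ b u < b v)
    (hadj : ∀ u v, adj u v = true → a u ≤ b v)
    (hadjC : ∀ u v, adj u v = true → ¬ C u v)
    (hnon : ∀ u v, nonadj u v = true → Apart a b u v ∨ C u v ∨ C v u) : False := by
  have asymm : ∀ u v, C u v → ¬ C v u := fun u v h h' =>
    lt_asymm (hsub _ _ h).1 (hsub _ _ h').1
  have step : ∀ u v w, nonadj u w = true → adj v w = true → C v u → C w u := by
    intro u v w hw hvw hv
    have s := hsub _ _ hv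
    have e1 := hadj _ _ hvw
    have e2 := hadj _ _ (adj_symm _ _ hvw)
    rcases hnon _ _ hw with (h | h) | h | h
    · linarith
    · linarith
    · exact absurd (htrans _ _ _ hv h) (hadjC _ _ hvw)
    · exact h
  have step' : ∀ u v w, nonadj u w = true → (v = w ∨ adj v w = true) → C v u → C w u := by
    rintro u v w hw (rfl | h) hv
    · exact hv
    · exact step u v w hw h hv
  -- Connectedness of the non-neighbourhood spreads `C v u` to all non-neighbours of `u`.
  have spread : ∀ u, u ≠ 7 → ∀ v w, nonadj u v = true → nonadj u w = true → C v u → C w u := by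
    intro u hu v w hv hw hvu
    obtain ⟨c, hc, hcon⟩ := nonadj_connected u hu
    obtain ⟨x, hx, hvx, hxc⟩ := hcon v hv
    obtain ⟨y, hy, hwy, hyc⟩ := hcon w hw
    have h1 := step' u c y hy (hyc.imp Eq.symm (adj_symm _ _))
      (step' u x c hc hxc (step' u v x hx hvx hvu))
    exact step' u y w hw (hwy.imp Eq.symm (adj_symm _ _)) h1
  -- `Big u` says that all non-neighbours of `u` are below `u`.
  let Big : Fin 9 → Prop := fun u => ∀ v, nonadj u v = true → C v u
  have small : ∀ u, u ≠ 7 → ¬ Big u → ∀ v, nonadj u v = true → ¬ C v u :=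
    fun u hu hb v hv hvu => hb fun w hw => spread u hu v w hv hw hvu
  have small_of_big : ∀ u v, nonadj u v = true → Big u → ¬ Big v := fun u v huv hu hv =>
    asymm _ _ (hu v huv) (hv u (nonadj_symm _ _ huv))
  have apart : ∀ u v, nonadj u v = true → u ≠ 7 → v ≠ 7 → ¬ Big u → ¬ Big v →
      Apart a b u v := by
    intro u v huv hu hv hbu hbv
    rcases hnon u v huv with h | h | h
    · exact h
    · exact absurd h (small v hv hbv u (nonadj_symm _ _ huv))
    · exact absurd h (small u hu hbu v huv)
  -- The non-neighbours `1`, `3`, `4` of `7` form one component.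
  have seven : (C 7 3 ∨ C 7 4) → ¬ C 1 7 ∧ ¬ C 3 7 ∧ ¬ C 4 7 := by
    intro h
    have h34 : C 3 7 → C 4 7 := step 7 3 4 (by decide) (by decide)
    have h43 : C 4 7 → C 3 7 := step 7 4 3 (by decide) (by decide)
    have h14 : C 1 7 → C 4 7 := step 7 1 4 (by decide) (by decide)
    have h4 : ¬ C 4 7 := fun h4 => h.elim (asymm _ _ (h43 h4)) (asymm _ _ h4)
    exact ⟨fun h1 => h4 (h14 h1), fun h3 => h4 (h34 h3), h4⟩
  have apart7 : ∀ u, nonadj u 7 = true → u ≠ 7 → ¬ Big u → ¬ C u 7 → Apart a b u 7 := by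
    intro u h7 hu hb hc
    rcases hnon u 7 h7 with h | h | h
    · exact h
    · exact absurd h hc
    · exact absurd h (small u hu hb 7 h7)
  by_cases b3 : Big 3
  · obtain ⟨h17, h37, h47⟩ := seven (Or.inl (b3 7 (by decide)))
    by_cases b4 : Big 4
    · have b2 := small_of_big 3 2 (by decide) b3
      have b5 := small_of_big 4 5 (by decide) b4
      have b1 := small_of_big 3 1 (by decide) b3
      exact no_four_cycle hadj 1 2 7 5 (by decide)
        (apart7 1 (by decide) (by decide) b1 h17)
        (apart 2 5 (by decide) (by decide) (by decide) b2 b5)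
    · have b0 := small_of_big 3 0 (by decide) b3
      have b2 := small_of_big 3 2 (by decide) b3
      exact no_four_cycle hadj 0 4 2 7 (by decide)
        (apart 0 2 (by decide) (by decide) (by decide) b0 b2)
        (apart7 4 (by decide) (by decide) b4 h47)
  · by_cases b4 : Big 4
    · obtain ⟨h17, h37, h47⟩ := seven (Or.inr (b4 7 (by decide)))
      have b5 := small_of_big 4 5 (by decide) b4
      have b6 := small_of_big 4 6 (by decide) b4
      exact no_four_cycle hadj 3 5 7 6 (by decide)
        (apart7 3 (by decide) (by decide) b3 h37)
        (apart 5 6 (by decide) (by decide) (by decide) b5 b6)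
    · have h15 : Big 1 ∨ Big 5 := by
        by_contra! h
        exact no_four_cycle hadj 1 4 3 5 (by decide)
          (apart 1 3 (by decide) (by decide) (by decide) h.1 b3)
          (apart 4 5 (by decide) (by decide) (by decide) b4 h.2)
      have b0 : ¬ Big 0 :=
        h15.elim (small_of_big 1 0 (by decide)) (small_of_big 5 0 (by decide))
      have b6 : ¬ Big 6 :=
        h15.elim (small_of_big 1 6 (by decide)) (small_of_big 5 6 (by decide))
      have b8 : ¬ Big 8 :=
        h15.elim (small_of_big 1 8 (by decide)) (small_of_big 5 8 (by decide))
      exact no_five_cycle hadj 0 4 3 6 8 (by decide)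
        (apart 0 3 (by decide) (by decide) (by decide) b0 b3)
        (apart 4 6 (by decide) (by decide) (by decide) b4 b6)
        (apart 3 8 (by decide) (by decide) (by decide) b3 b8)
        (apart 6 0 (by decide) (by decide) (by decide) b6 b0)
        (apart 8 4 (by decide) (by decide) (by decide) b8 b4)

/-- There is a flat grounded L-graph which is not an interval filament graph. -/
theorem flat_grounded_L_not_interval_filament :
    ∃ (n : ℕ) (l r h : Fin n → ℝ),
      (∀ v, l v < r v) ∧ (∀ v, 0 < h v) ∧
      (∀ u v : Fin n, u ≠ v →
        ({l u, r u} : Set ℝ) ∩ {l v, r v} = ∅ ∧ h u ≠ h v) ∧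
      (∀ u v : Fin n,
        ¬ (Set.Icc (l u) (r u) ⊆ Set.Icc (l v) (r v) ∧ h v < h u)) ∧
      ∀ (a b : Fin n → ℝ) (f : Fin n → ℝ → ℝ),
        (∀ v, a v < b v) →
        (∀ v, ContinuousOn (f v) (Set.Icc (a v) (b v))) →
        (∀ v, ∀ x ∈ Set.Icc (a v) (b v), 0 ≤ f v x) →
        (∀ v, f v (a v) = 0 ∧ f v (b v) = 0) →
        ¬ (∀ u v : Fin n, u ≠ v →
            ((FilCurve (a u) (b u) (f u) ∩ FilCurve (a v) (b v) (f v)).Nonempty ↔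
              (LShape (l u) (r u) (h u) ∩ LShape (l v) (r v) (h v)).Nonempty)) := by
  have hLR : ∀ v, coL v < coR v := by decide
  have hflat : ∀ u v, coL v ≤ coL u → coR u ≤ coR v → ¬ coH v < coH u := by decide
  refine ⟨9, fun v => coL v, fun v => coR v, fun v => coH v,
    fun v => Nat.cast_lt.2 (hLR v), fun v => Nat.cast_pos.2 (coH_pos v), ?_, ?_, ?_⟩
  · intro u v huv
    obtain ⟨h1, h2, h3, h4, h5⟩ := co_distinct u v huv
    refine ⟨?_, Nat.cast_injective.ne h5⟩
    ext x
    simp only [Set.mem_inter_iff, Set.mem_insert_iff, Set.mem_singleton_iff,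
      Set.mem_empty_iff_false, iff_false, not_and, not_or]
    rintro (rfl | rfl)
    · exact ⟨by exact_mod_cast h1, by exact_mod_cast h2⟩
    · exact ⟨by exact_mod_cast h3, by exact_mod_cast h4⟩
  · rintro u v ⟨hs, hh⟩
    have huv : (coL u : ℝ) ≤ coR u := by exact_mod_cast (hLR u).le
    rw [Set.Icc_subset_Icc_iff huv] at hs
    exact hflat u v (Nat.cast_le.1 hs.1) (Nat.cast_le.1 hs.2) (Nat.cast_lt.1 hh)
  · intro a b f hab hcont hpos hzero H
    have ne_of_adj : ∀ u v, adj u v = true → u ≠ v := by decide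
    have meet : ∀ u v, adj u v = true → ∃ x, x ∈ Set.Icc (a u) (b u) ∧
        x ∈ Set.Icc (a v) (b v) ∧ f u x = f v x := fun u v h =>
      exists_filCurve_of_nonempty
        ((H u v (ne_of_adj u v h)).2 ((LShape_meet_iff u v (ne_of_adj u v h)).2 h))
    refine no_model a b (fun u v => Below (a u) (b u) (f u) (a v) (b v) (f v))
      (fun u v w => Below.trans) (fun u v h => ⟨h.1, h.2.1⟩) ?_ ?_ ?_
    · intro u v h
      obtain ⟨x, h1, h2, -⟩ := meet u v h
      exact h1.1.trans h2.2
    · intro u v h hB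
      obtain ⟨x, h1, -, h3⟩ := meet u v h
      exact (hB.2.2 x h1).ne h3
    · intro u v h
      simp only [nonadj, Bool.and_eq_true, decide_eq_true_eq, Bool.not_eq_true'] at h
      refine filament_trichotomy (hab u) (hcont u) (hcont v) (hpos u) (hpos v)
        (hzero u).1 (hzero u).2 (hzero v).1 (hzero v).2 fun hm => ?_
      rw [H u v h.1, LShape_meet_iff u v h.1, h.2] at hm
      exact Bool.false_ne_true hm
end

section
/- There exists a finite family (P_v)_{v ∈ Fin n} of polygons inscribed in the unit circle such that no finite simple family (S_v)_{v ∈ Fin n} of grounded strings satisfies, for all distinct u, v, that S_u ∩ S_v ≠ ∅ iff P_u ∩ P_v ≠ ∅. (There is a polygon-circle graph which is not an outer-1-string graph.) -/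
/-- `s` is a grounded string with base point `β`: the image of an injective continuous map
`γ` on `[0,1]`, with `γ 0 = (β, 0)` on the x-axis and all other points strictly above it. -/
def IsGroundedString (s : Set (ℝ × ℝ)) (β : ℝ) : Prop :=
  ∃ γ : ℝ → ℝ × ℝ, ContinuousOn γ (Set.Icc 0 1) ∧ Set.InjOn γ (Set.Icc 0 1) ∧
    γ 0 = (β, 0) ∧ (∀ t ∈ Set.Ioc (0 : ℝ) 1, 0 < (γ t).2) ∧ s = γ '' Set.Icc 0 1

/-! ### Interlacing paths in the upper half-plane -/

/-- If `g` is a continuous logarithm of `f` along the real line and multiplication by `c` brings the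
values of `f` into the slit plane, then the variation of `im g` can be read off from the principal
argument of `c * f`. -/
lemma im_sub_im_eq_arg_sub_arg {f g : ℝ → ℂ} (hf : Continuous f) (hg : Continuous g)
    (hexp : ∀ s, Complex.exp (g s) = f s) {c : ℂ} (hc : c ≠ 0)
    (hs : ∀ s, c * f s ∈ Complex.slitPlane) :
    (g 1).im - (g 0).im = Complex.arg (c * f 1) - Complex.arg (c * f 0) := by
  have hlog : Continuous fun s ↦ Complex.log (c * f s) :=
    (continuous_const.mul hf).clog hs
  have key : g = fun s ↦ Complex.log (c * f s) + (g 0 - Complex.log (c * f 0)) := by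
    refine Complex.isCoveringMap_exp.eq_of_comp_eq hg (hlog.add continuous_const) ?_ 0 (by simp)
    funext s
    have hne : ∀ s, c * f s ≠ 0 := fun s ↦ Complex.slitPlane_ne_zero (hs s)
    have h0 : f 0 ≠ 0 := right_ne_zero_of_mul (hne 0)
    apply Subtype.ext
    simp only [Function.comp_apply, Complex.exp_add, Complex.exp_sub, hexp,
      Complex.exp_log (hne _)]
    field_simp
  have h1 := congrArg Complex.im (congrFun key 1)
  simp only [Complex.add_im, Complex.sub_im, Complex.log_im] at h1
  linarith

/-- A nowhere vanishing continuous complex function on the plane has a continuous logarithm. -/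
lemma exists_continuous_log {F : ℝ × ℝ → ℂ} (hF : Continuous F) (h0 : ∀ p, F p ≠ 0) :
    ∃ G : ℝ × ℝ → ℂ, Continuous G ∧ ∀ p, Complex.exp (G p) = F p := by
  obtain ⟨G, ⟨-, hG⟩, -⟩ := Complex.isCoveringMap_exp.existsUnique_continuousMap_lifts
    (⟨fun p ↦ ⟨F p, h0 p⟩, by fun_prop⟩ : C(ℝ × ℝ, {z : ℂ // z ≠ 0})) 0 (Complex.log (F 0))
    (Subtype.ext (Complex.exp_log (h0 0)))
  exact ⟨G, G.continuous, fun p ↦ congrArg Subtype.val (congrFun hG p)⟩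

lemma arg_I_mul_pos {x : ℝ} (hx : 0 < x) : Complex.arg (Complex.I * x) = Real.pi / 2 := by
  rw [mul_comm, Complex.arg_real_mul _ hx, Complex.arg_I]

lemma arg_I_mul_neg {x : ℝ} (hx : x < 0) : Complex.arg (Complex.I * x) = -(Real.pi / 2) := by
  rw [show Complex.I * (x : ℂ) = ((-x : ℝ) : ℂ) * (-Complex.I) by push_cast; ring,
    Complex.arg_real_mul _ (by linarith), Complex.arg_neg_I]

lemma arg_neg_I_mul_pos {x : ℝ} (hx : 0 < x) :
    Complex.arg (-Complex.I * x) = -(Real.pi / 2) := by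
  rw [show -Complex.I * (x : ℂ) = Complex.I * ((-x : ℝ) : ℂ) by push_cast; ring,
    arg_I_mul_neg (by linarith)]

lemma arg_neg_I_mul_neg {x : ℝ} (hx : x < 0) : Complex.arg (-Complex.I * x) = Real.pi / 2 := by
  rw [show -Complex.I * (x : ℂ) = Complex.I * ((-x : ℝ) : ℂ) by push_cast; ring,
    arg_I_mul_pos (by linarith)]

lemma neg_I_mul_mem_slitPlane {z : ℂ} (hz : z ≠ 0) (him : 0 ≤ z.im) :
    -Complex.I * z ∈ Complex.slitPlane := by
  rw [Complex.mem_slitPlane_iff]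
  by_cases h : z.re = 0
  · have : z.im ≠ 0 := fun h' ↦ hz (Complex.ext h h')
    left
    simpa using lt_of_le_of_ne him this.symm
  · right
    simpa using h

lemma I_mul_mem_slitPlane {z : ℂ} (hz : z ≠ 0) (him : z.im ≤ 0) :
    Complex.I * z ∈ Complex.slitPlane := by
  have := neg_I_mul_mem_slitPlane (z := -z) (neg_ne_zero.2 hz) (by simpa using him)
  simpa using this

/-- Two paths in the closed upper half-plane whose ends interlace on the `x`-axis meet.
Otherwise `γ s - δ t` has a continuous logarithm on the square; along the four sides it stays in a
half-plane, and adding up the changes of argument gives `-2π` around the boundary. -/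
lemma exists_path_eq_of_interlacing {a b c d : ℝ} (hab : a < b) (hbc : b < c) (hcd : c < d)
    (γ : Path ((a, 0) : ℝ × ℝ) (c, 0)) (δ : Path ((b, 0) : ℝ × ℝ) (d, 0))
    (hγ : ∀ s, 0 ≤ (γ s).2) (hδ : ∀ t, 0 ≤ (δ t).2) : ∃ s t, γ s = δ t := by
  by_contra! hne
  let F : ℝ × ℝ → ℂ := fun p ↦
    ⟨(γ.extend p.1).1 - (δ.extend p.2).1, (γ.extend p.1).2 - (δ.extend p.2).2⟩
  have hγc := γ.continuous_extend
  have hδc := δ.continuous_extend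
  have hγe : ∀ s, 0 ≤ (γ.extend s).2 := fun s ↦ hγ _
  have hδe : ∀ t, 0 ≤ (δ.extend t).2 := fun t ↦ hδ _
  have hF : Continuous F := by
    have : F = fun p ↦ (((γ.extend p.1).1 - (δ.extend p.2).1 : ℝ) : ℂ)
        + (((γ.extend p.1).2 - (δ.extend p.2).2 : ℝ) : ℂ) * Complex.I := by
      funext p
      apply Complex.ext <;> simp [F]
    rw [this]
    fun_prop
  have hF0 : ∀ p, F p ≠ 0 := by
    intro p hp
    have h1 := congrArg Complex.re hp
    have h2 := congrArg Complex.im hp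
    simp only [F, Complex.zero_re, Complex.zero_im, sub_eq_zero] at h1 h2
    exact hne _ _ (Prod.ext h1 h2)
  obtain ⟨G, hG, hexp⟩ := exists_continuous_log hF hF0
  have e00 : F (0, 0) = ((a - b : ℝ) : ℂ) := by apply Complex.ext <;> simp [F]
  have e10 : F (1, 0) = ((c - b : ℝ) : ℂ) := by apply Complex.ext <;> simp [F]
  have e01 : F (0, 1) = ((a - d : ℝ) : ℂ) := by apply Complex.ext <;> simp [F]
  have e11 : F (1, 1) = ((c - d : ℝ) : ℂ) := by apply Complex.ext <;> simp [F]
  have bottom := im_sub_im_eq_arg_sub_arg (f := fun s ↦ F (s, 0)) (g := fun s ↦ G (s, 0))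
    (by fun_prop) (by fun_prop) (fun s ↦ hexp _) (neg_ne_zero.2 Complex.I_ne_zero)
    (fun s ↦ neg_I_mul_mem_slitPlane (hF0 _) (by simpa [F] using hγe s))
  have top := im_sub_im_eq_arg_sub_arg (f := fun s ↦ F (s, 1)) (g := fun s ↦ G (s, 1))
    (by fun_prop) (by fun_prop) (fun s ↦ hexp _) (neg_ne_zero.2 Complex.I_ne_zero)
    (fun s ↦ neg_I_mul_mem_slitPlane (hF0 _) (by simpa [F] using hγe s))
  have left := im_sub_im_eq_arg_sub_arg (f := fun t ↦ F (0, t)) (g := fun t ↦ G (0, t))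
    (by fun_prop) (by fun_prop) (fun s ↦ hexp _) Complex.I_ne_zero
    (fun s ↦ I_mul_mem_slitPlane (hF0 _) (by simpa [F] using hδe s))
  have right := im_sub_im_eq_arg_sub_arg (f := fun t ↦ F (1, t)) (g := fun t ↦ G (1, t))
    (by fun_prop) (by fun_prop) (fun s ↦ hexp _) Complex.I_ne_zero
    (fun s ↦ I_mul_mem_slitPlane (hF0 _) (by simpa [F] using hδe s))
  simp only [e00, e10, e01, e11] at bottom top left right
  rw [arg_neg_I_mul_pos (by linarith), arg_neg_I_mul_neg (by linarith)] at bottom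
  rw [arg_neg_I_mul_neg (by linarith), arg_neg_I_mul_neg (by linarith)] at top
  rw [arg_I_mul_neg (by linarith), arg_I_mul_neg (by linarith)] at left
  rw [arg_I_mul_neg (by linarith), arg_I_mul_pos (by linarith)] at right
  linarith [Real.pi_pos]

/-- Set version of `exists_path_eq_of_interlacing`. -/
lemma inter_nonempty_of_interlacing {X Y : Set (ℝ × ℝ)} (hX : IsPathConnected X)
    (hY : IsPathConnected Y) (hX0 : ∀ p ∈ X, 0 ≤ p.2) (hY0 : ∀ p ∈ Y, 0 ≤ p.2) {a b c d : ℝ}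
    (hab : a < b) (hbc : b < c) (hcd : c < d) (ha : (a, 0) ∈ X) (hc : (c, 0) ∈ X)
    (hb : (b, 0) ∈ Y) (hd : (d, 0) ∈ Y) : (X ∩ Y).Nonempty := by
  obtain ⟨γ, hγ⟩ := hX.joinedIn _ ha _ hc
  obtain ⟨δ, hδ⟩ := hY.joinedIn _ hb _ hd
  obtain ⟨s, t, h⟩ := exists_path_eq_of_interlacing hab hbc hcd γ δ (fun s ↦ hX0 _ (hγ s))
    (fun t ↦ hY0 _ (hδ t))
  exact ⟨γ s, hγ s, h ▸ hδ t⟩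

/-! ### Grounded strings -/

lemma IsGroundedString.isPathConnected {s : Set (ℝ × ℝ)} {β : ℝ} (h : IsGroundedString s β) :
    IsPathConnected s := by
  obtain ⟨γ, hc, -, -, -, rfl⟩ := h
  exact ((convex_Icc 0 1).isPathConnected ⟨0, by simp⟩).image' hc

lemma IsGroundedString.nonneg {s : Set (ℝ × ℝ)} {β : ℝ} (h : IsGroundedString s β) :
    ∀ p ∈ s, 0 ≤ p.2 := by
  obtain ⟨γ, -, -, h0, hpos, rfl⟩ := h
  rintro _ ⟨t, ht, rfl⟩
  rcases ht.1.eq_or_lt with rfl | h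
  · simp [h0]
  · exact (hpos t ⟨h, ht.2⟩).le

lemma IsGroundedString.base_mem {s : Set (ℝ × ℝ)} {β : ℝ} (h : IsGroundedString s β) :
    (β, 0) ∈ s := by
  obtain ⟨γ, -, -, h0, -, rfl⟩ := h
  exact ⟨0, by simp, h0⟩

/-- The grounded strings `Ci`, `Cj`, `Ck`, `Cl` have their bases in this order, the arc `A` joins
`Ci` to `Ck` and `D` joins `Cj` to `Cl`. If neither of `Ci`, `Ck` meets `Cj`, `Cl` or `D`, and `A`
does not meet `Cj` or `Cl`, then `A` and `D` meet. -/
lemma arc_inter_nonempty {Ci Cj Ck Cl A D : Set (ℝ × ℝ)} {bi bj bk bl : ℝ}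
    (hi : IsGroundedString Ci bi) (hj : IsGroundedString Cj bj)
    (hk : IsGroundedString Ck bk) (hl : IsGroundedString Cl bl)
    (hij : bi < bj) (hjk : bj < bk) (hkl : bk < bl)
    (hA : IsPathConnected A) (hD : IsPathConnected D)
    (hA0 : ∀ p ∈ A, 0 ≤ p.2) (hD0 : ∀ p ∈ D, 0 ≤ p.2)
    (hiA : (Ci ∩ A).Nonempty) (hkA : (A ∩ Ck).Nonempty)
    (hjD : (Cj ∩ D).Nonempty) (hlD : (D ∩ Cl).Nonempty)
    (dij : Disjoint Ci Cj) (dil : Disjoint Ci Cl) (dkj : Disjoint Ck Cj) (dkl : Disjoint Ck Cl)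
    (diD : Disjoint Ci D) (dkD : Disjoint Ck D) (djA : Disjoint A Cj) (dlA : Disjoint A Cl) :
    (A ∩ D).Nonempty := by
  have hX : IsPathConnected ((Ci ∪ A) ∪ Ck) :=
    (hi.isPathConnected.union hA hiA).union hk.isPathConnected
      (hkA.mono (Set.inter_subset_inter_left _ Set.subset_union_right))
  have hY : IsPathConnected ((Cj ∪ D) ∪ Cl) :=
    (hj.isPathConnected.union hD hjD).union hl.isPathConnected
      (hlD.mono (Set.inter_subset_inter_left _ Set.subset_union_right))
  obtain ⟨x, hxX, hxY⟩ := inter_nonempty_of_interlacing hX hY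
    (by rintro p ((hp | hp) | hp); exacts [hi.nonneg p hp, hA0 p hp, hk.nonneg p hp])
    (by rintro p ((hp | hp) | hp); exacts [hj.nonneg p hp, hD0 p hp, hl.nonneg p hp])
    hij hjk hkl (.inl (.inl hi.base_mem)) (.inr hk.base_mem) (.inl (.inl hj.base_mem))
    (.inr hl.base_mem)
  rw [Set.disjoint_left] at dij dil dkj dkl diD dkD djA dlA
  rcases hxX with (h | h) | h <;> rcases hxY with (h' | h') | h'
  exacts [(dij h h').elim, (diD h h').elim, (dil h h').elim, (djA h h').elim, ⟨x, h, h'⟩,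
    (dlA h h').elim, (dkj h h').elim, (dkD h h').elim, (dkl h h').elim]

/-- Six disjoint grounded strings with increasing bases cannot be visited alternately by two
grounded strings `T` (visiting exactly the even ones) and `T'` (visiting exactly the odd ones)
that have at most one common point: `T'` would meet `T` both before and after the middle one of
the three even visits, hence exactly at that visit, on a string that `T'` avoids. -/
lemma false_of_alternating_visits {C : Fin 6 → Set (ℝ × ℝ)} {b : Fin 6 → ℝ}
    {T T' : Set (ℝ × ℝ)} {β β' : ℝ} (hC : ∀ i, IsGroundedString (C i) (b i)) (hb : StrictMono b)
    (hT : IsGroundedString T β) (hT' : IsGroundedString T' β')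
    (hd : ∀ i j, i ≠ j → Disjoint (C i) (C j))
    (h0 : (T ∩ C 0).Nonempty) (h2 : (T ∩ C 2).Nonempty) (h4 : (T ∩ C 4).Nonempty)
    (h1 : Disjoint T (C 1)) (h3 : Disjoint T (C 3)) (h5 : Disjoint T (C 5))
    (h1' : (T' ∩ C 1).Nonempty) (h3' : (T' ∩ C 3).Nonempty) (h5' : (T' ∩ C 5).Nonempty)
    (h0' : Disjoint T' (C 0)) (h2' : Disjoint T' (C 2)) (h4' : Disjoint T' (C 4))
    (hs : (T ∩ T').Subsingleton) : False := by
  have hTn := hT.nonneg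
  obtain ⟨γ, hc, hinj, -, -, rfl⟩ := hT
  obtain ⟨_, ⟨p, hp, rfl⟩, hp0⟩ := h0
  obtain ⟨_, ⟨q, hq, rfl⟩, hq2⟩ := h2
  obtain ⟨_, ⟨r, hr, rfl⟩, hr4⟩ := h4
  -- For the visits at times `u`, `v` to `C i`, `C k`, with `T'` visiting `C j`, `C l` and
  -- `i < j < k < l`, the string `T'` meets the arc of `T` between the two visits.
  have arc : ∀ {u v : ℝ} {i j k l : Fin 6}, u ∈ Set.Icc (0 : ℝ) 1 → v ∈ Set.Icc (0 : ℝ) 1 →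
      i < j → j < k → k < l → γ u ∈ C i → γ v ∈ C k → (T' ∩ C j).Nonempty →
      (T' ∩ C l).Nonempty → Disjoint T' (C i) → Disjoint T' (C k) →
      Disjoint (γ '' Set.Icc 0 1) (C j) → Disjoint (γ '' Set.Icc 0 1) (C l) →
      ∃ x ∈ Set.uIcc u v, γ x ∈ T' := by
    intro u v i j k l hu hv hij hjk hkl hui hvk hj hl hi' hk' hj' hl'
    have hsub : Set.uIcc u v ⊆ Set.Icc 0 1 := Set.uIcc_subset_Icc hu hv
    have hsub' : γ '' Set.uIcc u v ⊆ γ '' Set.Icc 0 1 := Set.image_mono hsub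
    obtain ⟨_, ⟨x, hx, rfl⟩, hxT⟩ := arc_inter_nonempty (A := γ '' Set.uIcc u v)
      (hC i) (hC j) (hC k) (hC l) (hb hij) (hb hjk) (hb hkl)
      (((convex_uIcc u v).isPathConnected ⟨u, Set.left_mem_uIcc⟩).image' (hc.mono hsub))
      hT'.isPathConnected (fun p hp ↦ hTn p (hsub' hp)) hT'.nonneg
      ⟨γ u, hui, u, Set.left_mem_uIcc, rfl⟩ ⟨γ v, ⟨v, Set.right_mem_uIcc, rfl⟩, hvk⟩
      (by rwa [Set.inter_comm]) hl (hd _ _ hij.ne) (hd _ _ ((hij.trans hjk).trans hkl).ne)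
      (hd _ _ hjk.ne') (hd _ _ hkl.ne) hi'.symm hk'.symm (hj'.mono_left hsub')
      (hl'.mono_left hsub')
    exact ⟨x, hx, hxT⟩
  have a02 := arc hp hq (by decide : (0 : Fin 6) < 1) (by decide : (1 : Fin 6) < 2)
    (by decide : (2 : Fin 6) < 3) hp0 hq2 h1' h3' h0' h2' h1 h3
  have a24 := arc hq hr (by decide : (2 : Fin 6) < 3) (by decide : (3 : Fin 6) < 4)
    (by decide : (4 : Fin 6) < 5) hq2 hr4 h3' h5' h2' h4' h3 h5
  have a04 := arc hp hr (by decide : (0 : Fin 6) < 1) (by decide : (1 : Fin 6) < 4)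
    (by decide : (4 : Fin 6) < 5) hp0 hr4 h1' h5' h0' h4' h1 h5
  have a20 := Set.uIcc_comm p q ▸ a02
  have a42 := Set.uIcc_comm q r ▸ a24
  have a40 := Set.uIcc_comm p r ▸ a04
  -- The two common points coincide by `hs`, so they are the middle visit.
  have mid : ∀ {u v w : ℝ}, u ∈ Set.Icc (0 : ℝ) 1 → w ∈ Set.Icc (0 : ℝ) 1 → u ≤ v → v ≤ w →
      (∃ x ∈ Set.uIcc u v, γ x ∈ T') → (∃ x ∈ Set.uIcc v w, γ x ∈ T') → γ v ∈ T' := by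
    rintro u v w hu hw huv hvw ⟨x, hx, hxT⟩ ⟨y, hy, hyT⟩
    rw [Set.uIcc_of_le huv] at hx
    rw [Set.uIcc_of_le hvw] at hy
    have hx1 : x ∈ Set.Icc (0 : ℝ) 1 := ⟨hu.1.trans hx.1, hx.2.trans (hvw.trans hw.2)⟩
    have hy1 : y ∈ Set.Icc (0 : ℝ) 1 := ⟨(hu.1.trans huv).trans hy.1, hy.2.trans hw.2⟩
    have hxy : x = y := hinj hx1 hy1 (hs ⟨⟨x, hx1, rfl⟩, hxT⟩ ⟨⟨y, hy1, rfl⟩, hyT⟩)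
    have : x = v := le_antisymm hx.2 (hxy ▸ hy.1)
    exact this ▸ hxT
  rw [Set.disjoint_left] at h0' h2' h4'
  rcases le_total p q with hpq | hpq <;> rcases le_total q r with hqr | hqr <;>
    rcases le_total p r with hpr | hpr
  · exact h2' (mid hp hr hpq hqr a02 a24) hq2
  · exact h2' (mid hp hr hpq hqr a02 a24) hq2
  · exact h4' (mid hp hq hpr hqr a04 a42) hr4
  · exact h0' (mid hr hq hpr hpq a40 a02) hp0
  · exact h0' (mid hq hr hpq hpr a20 a04) hp0
  · exact h4' (mid hq hp hqr hpr a24 a40) hr4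
  · exact h2' (mid hr hp hqr hpq a42 a20) hq2
  · exact h2' (mid hr hp hqr hpq a42 a20) hq2

/-! ### Inscribed polygons -/

/-- The rational parametrization of the unit circle. -/
noncomputable def circlePt (t : ℝ) : ℝ × ℝ := ((1 - t ^ 2) / (1 + t ^ 2), 2 * t / (1 + t ^ 2))

lemma circlePt_mem (t : ℝ) : (circlePt t).1 ^ 2 + (circlePt t).2 ^ 2 = 1 := by
  have : 1 + t ^ 2 ≠ 0 := by positivity
  simp only [circlePt]
  field_simp
  ring

lemma circlePt_injective : Function.Injective circlePt := by
  -- the parameter is recovered as `y / (1 + x)`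
  have h : ∀ t, (circlePt t).2 / (1 + (circlePt t).1) = t := by
    intro t
    have : 1 + t ^ 2 ≠ 0 := by positivity
    have h2 : 1 + (circlePt t).1 = 2 / (1 + t ^ 2) := by
      simp only [circlePt]
      field_simp
      ring
    rw [h2]
    simp only [circlePt]
    field_simp
  exact fun s t hst ↦ by rw [← h s, ← h t, hst]

/-- If the circle points in `U` have parameters strictly between `α` and `β`, and those in `V` have
parameters outside of the closed interval, then the line through the points with parameters `α` and
`β` separates the convex hulls: `(t - α) (t - β) / (1 + t²)` is an affine function of the circle
point with parameter `t`. -/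
lemma disjoint_convexHull {U V : Set (ℝ × ℝ)} {α β : ℝ}
    (hU : ∀ p ∈ U, ∃ t, p = circlePt t ∧ (t - α) * (t - β) < 0)
    (hV : ∀ p ∈ V, ∃ t, p = circlePt t ∧ 0 < (t - α) * (t - β)) :
    Disjoint (convexHull ℝ U) (convexHull ℝ V) := by
  let L : (ℝ × ℝ) →ₗ[ℝ] ℝ :=
    ((α * β - 1) / 2) • LinearMap.fst ℝ ℝ ℝ - ((α + β) / 2) • LinearMap.snd ℝ ℝ ℝ
  have hL : ∀ t, L (circlePt t) + (α * β + 1) / 2 = (t - α) * (t - β) / (1 + t ^ 2) := by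
    intro t
    have : 1 + t ^ 2 ≠ 0 := by positivity
    simp only [L, circlePt, LinearMap.sub_apply, LinearMap.smul_apply, LinearMap.fst_apply,
      LinearMap.snd_apply, smul_eq_mul]
    field_simp
    ring
  have h1 : convexHull ℝ U ⊆ {p | L p < -((α * β + 1) / 2)} := by
    refine convexHull_min ?_ (convex_halfSpace_lt L.isLinear _)
    intro p hp
    obtain ⟨t, rfl, ht⟩ := hU p hp
    have := div_neg_of_neg_of_pos ht (by positivity : 0 < 1 + t ^ 2)
    rw [← hL] at this
    simp only [Set.mem_ofPred_eq]
    linarith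
  have h2 : convexHull ℝ V ⊆ {p | -((α * β + 1) / 2) < L p} := by
    refine convexHull_min ?_ (convex_halfSpace_gt L.isLinear _)
    intro p hp
    obtain ⟨t, rfl, ht⟩ := hV p hp
    have := div_pos ht (by positivity : 0 < 1 + t ^ 2)
    rw [← hL] at this
    simp only [Set.mem_ofPred_eq]
    linarith
  exact Set.disjoint_left.2 fun p hp hp' ↦ by
    have h3 : L p < _ := h1 hp
    have h4 : _ < L p := h2 hp'
    exact lt_asymm h3 h4

/-- The index set of the family: six ears and one triangle for each triple of ears. -/
abbrev EarTriple : Type := Fin 6 ⊕ {A : Finset (Fin 6) // A.card = 3}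

/-- The parameters on the circle of the vertices: ear `i` has three consecutive ones, and a triple
has the middle parameter of each of its ears. -/
def vertexParams : EarTriple → Finset ℤ
  | .inl i => {3 * (i : ℤ) - 1, 3 * (i : ℤ), 3 * (i : ℤ) + 1}
  | .inr A => A.1.image fun i : Fin 6 ↦ 3 * (i : ℤ)

/-- The family of inscribed triangles, with vertices given by `vertexParams`. -/
noncomputable def earPolygon (v : EarTriple) : Set (ℝ × ℝ) :=
  convexHull ℝ (((vertexParams v).image fun k : ℤ ↦ circlePt k : Finset (ℝ × ℝ)) : Set (ℝ × ℝ))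

lemma earPolygon_isInscribed (v : EarTriple) : IsInscribedPolygon (earPolygon v) := by
  refine ⟨_, ?_, ?_, rfl⟩
  · rw [Finset.card_image_of_injective _ fun k l h ↦ Int.cast_injective (circlePt_injective h)]
    rcases v with i | A
    · simp only [vertexParams]
      rw [Finset.card_eq_three.2 ⟨_, _, _, by omega, by omega, by omega, rfl⟩]
    · simp only [vertexParams]
      rw [Finset.card_image_of_injective _ fun i j h ↦ Fin.ext (by simpa using h), A.2]
  · intro p hp
    obtain ⟨k, -, rfl⟩ := Finset.mem_image.1 hp
    exact circlePt_mem _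

/-- An ear is disjoint from every polygon that has no vertex on its arc. -/
lemma disjoint_earPolygon {i : Fin 6} {v : EarTriple}
    (h : ∀ k ∈ vertexParams v, k < 3 * (i : ℤ) - 1 ∨ 3 * (i : ℤ) + 1 < k) :
    Disjoint (earPolygon (.inl i)) (earPolygon v) := by
  refine disjoint_convexHull (α := 3 * i - 3 / 2) (β := 3 * i + 3 / 2) ?_ ?_
  · intro p hp
    obtain ⟨k, hk, rfl⟩ := Finset.mem_image.1 (Finset.mem_coe.1 hp)
    refine ⟨k, rfl, ?_⟩
    simp only [vertexParams, Finset.mem_insert, Finset.mem_singleton] at hk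
    rcases hk with rfl | rfl | rfl <;> push_cast <;> ring_nf <;> norm_num
  · intro p hp
    obtain ⟨k, hk, rfl⟩ := Finset.mem_image.1 (Finset.mem_coe.1 hp)
    refine ⟨k, rfl, ?_⟩
    rcases h k hk with h | h
    · have h' : (k : ℝ) + 1 ≤ 3 * i - 1 := by exact_mod_cast h
      exact mul_pos_of_neg_of_neg (by linarith) (by linarith)
    · have h' : 3 * (i : ℝ) + 1 + 1 ≤ k := by exact_mod_cast h
      exact mul_pos (by linarith) (by linarith)

lemma disjoint_ears {i j : Fin 6} (hij : i ≠ j) :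
    Disjoint (earPolygon (.inl i)) (earPolygon (.inl j)) := by
  refine disjoint_earPolygon fun k hk ↦ ?_
  have : (i : ℕ) ≠ j := fun h ↦ hij (Fin.ext h)
  simp only [vertexParams, Finset.mem_insert, Finset.mem_singleton] at hk
  omega

lemma disjoint_ear_triple {i : Fin 6} {A : {A : Finset (Fin 6) // A.card = 3}} (hi : i ∉ A.1) :
    Disjoint (earPolygon (.inl i)) (earPolygon (.inr A)) := by
  refine disjoint_earPolygon fun k hk ↦ ?_
  obtain ⟨j, hj, rfl⟩ := Finset.mem_image.1 hk
  have : (i : ℕ) ≠ j := fun h ↦ hi (Fin.ext h ▸ hj)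
  omega

lemma triple_inter_ear_nonempty {i : Fin 6} {A : {A : Finset (Fin 6) // A.card = 3}}
    (hi : i ∈ A.1) : (earPolygon (.inr A) ∩ earPolygon (.inl i)).Nonempty := by
  refine ⟨circlePt ((3 * (i : ℤ) : ℤ) : ℝ), subset_convexHull ℝ _ ?_, subset_convexHull ℝ _ ?_⟩
  · exact Finset.mem_coe.2 (Finset.mem_image_of_mem _ (Finset.mem_image_of_mem _ hi))
  · exact Finset.mem_coe.2 (Finset.mem_image_of_mem _ (by simp [vertexParams]))

/-! ### The contradiction -/

/-- The intersection graph of `earPolygon` has no simple representation by grounded strings. -/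
lemma earPolygon_no_strings (S : EarTriple → Set (ℝ × ℝ)) (β : EarTriple → ℝ)
    (hS : ∀ v, IsGroundedString (S v) (β v))
    (hs : ∀ u v, u ≠ v → (S u ∩ S v).Subsingleton)
    (hadj : ∀ u v, u ≠ v → ((S u ∩ S v).Nonempty ↔ (earPolygon u ∩ earPolygon v).Nonempty)) :
    False := by
  have hdisj : ∀ {u v}, u ≠ v → Disjoint (earPolygon u) (earPolygon v) →
      Disjoint (S u) (S v) := by
    intro u v huv h
    rw [Set.disjoint_iff_inter_eq_empty, ← Set.not_nonempty_iff_eq_empty] at h ⊢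
    rwa [hadj u v huv]
  have hears : ∀ i j : Fin 6, i ≠ j → Disjoint (S (.inl i)) (S (.inl j)) := fun i j hij ↦
    hdisj (by simpa using hij) (disjoint_ears hij)
  have hvisit : ∀ (A : {A : Finset (Fin 6) // A.card = 3}) {i : Fin 6}, i ∈ A.1 →
      (S (.inr A) ∩ S (.inl i)).Nonempty := fun A i hi ↦
    (hadj _ _ (by simp)).2 (triple_inter_ear_nonempty hi)
  have havoid : ∀ (A : {A : Finset (Fin 6) // A.card = 3}) {i : Fin 6}, i ∉ A.1 →
      Disjoint (S (.inr A)) (S (.inl i)) := fun A i hi ↦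
    hdisj (by simp) (disjoint_ear_triple hi).symm
  -- `σ` lists the ears by increasing base points of their strings
  let b : Fin 6 → ℝ := fun i ↦ β (.inl i)
  have hb : Function.Injective b := by
    intro i j hij
    by_contra hne
    refine Set.disjoint_left.1 (hears i j hne) (hS (.inl i)).base_mem ?_
    rw [show β (.inl i) = β (.inl j) from hij]
    exact (hS (.inl j)).base_mem
  let σ := Tuple.sort b
  have hσ : StrictMono (b ∘ σ) :=
    (Tuple.monotone_sort b).strictMono_of_injective (hb.comp σ.injective)
  let E : {A : Finset (Fin 6) // A.card = 3} :=
    ⟨({0, 2, 4} : Finset (Fin 6)).map σ.toEmbedding, by rw [Finset.card_map]; rfl⟩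
  let O : {A : Finset (Fin 6) // A.card = 3} :=
    ⟨({1, 3, 5} : Finset (Fin 6)).map σ.toEmbedding, by rw [Finset.card_map]; rfl⟩
  have hE : ∀ i, σ i ∈ E.1 ↔ i ∈ ({0, 2, 4} : Finset (Fin 6)) := fun i ↦
    Finset.mem_map' σ.toEmbedding
  have hO : ∀ i, σ i ∈ O.1 ↔ i ∈ ({1, 3, 5} : Finset (Fin 6)) := fun i ↦
    Finset.mem_map' σ.toEmbedding
  have hEO : (Sum.inr E : EarTriple) ≠ Sum.inr O := by
    intro h
    have h' : E = O := Sum.inr_injective h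
    have h0 : σ 0 ∈ O.1 := h' ▸ (hE 0).2 (by decide)
    exact absurd ((hO 0).1 h0) (by decide)
  exact false_of_alternating_visits (C := fun i ↦ S (.inl (σ i))) (fun i ↦ hS _) hσ
    (hS (.inr E)) (hS (.inr O)) (fun i j hij ↦ hears _ _ (σ.injective.ne hij))
    (hvisit E ((hE 0).2 (by decide))) (hvisit E ((hE 2).2 (by decide)))
    (hvisit E ((hE 4).2 (by decide))) (havoid E (mt (hE 1).1 (by decide)))
    (havoid E (mt (hE 3).1 (by decide))) (havoid E (mt (hE 5).1 (by decide)))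
    (hvisit O ((hO 1).2 (by decide))) (hvisit O ((hO 3).2 (by decide)))
    (hvisit O ((hO 5).2 (by decide))) (havoid O (mt (hO 0).1 (by decide)))
    (havoid O (mt (hO 2).1 (by decide))) (havoid O (mt (hO 4).1 (by decide)))
    (hs _ _ hEO)

/-- There is a polygon-circle graph which is not an outer-1-string graph. -/
theorem polygon_circle_not_outer_one_string :
    ∃ (n : ℕ) (P : Fin n → Set (ℝ × ℝ)),
      (∀ v, IsInscribedPolygon (P v)) ∧
      ∀ (S : Fin n → Set (ℝ × ℝ)) (β : Fin n → ℝ),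
        (∀ v, IsGroundedString (S v) (β v)) →
        (∀ u v : Fin n, u ≠ v → (S u ∩ S v).Subsingleton) →
        ¬ (∀ u v : Fin n, u ≠ v → ((S u ∩ S v).Nonempty ↔ (P u ∩ P v).Nonempty)) := by
  let e := Fintype.equivFin EarTriple
  refine ⟨_, fun v ↦ earPolygon (e.symm v), fun v ↦ earPolygon_isInscribed _, ?_⟩
  intro S β hS hs hadj
  refine earPolygon_no_strings (fun v ↦ S (e v)) (fun v ↦ β (e v)) (fun v ↦ hS _)
    (fun u v huv ↦ hs _ _ (e.injective.ne huv)) (fun u v huv ↦ ?_)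
  simpa using hadj (e u) (e v) (e.injective.ne huv)
end
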